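/- arXiv:1006.0497 — 2 statements merged into one kernel-verified Lean document; each statement's English description precedes it below -/
import Mathlib

section
/- Let A, A', A'' be commutative rings and f : A' → A, g : A'' → A ring homomorphisms such that g is surjective and its kernel is nilpotent. Let B := {(x,y) ∈ A' × A'' : f(x) = g(y)} be the fibered product ring, a subring of A' × A''. Let M' be a commutative A'-algebra that is flat as an A'-module, M'' a commutative A''-algebra that is flat as an A''-module, and let α : A ⊗_{A'} M' → A ⊗_{A''} M'' be an isomorphism of A-algebras. Define N := {(m', m'') ∈ M' × M'' : α(1 ⊗ m') = 1 ⊗ m''}. Then N is a B-subalgebra of the product algebra M' × M'', N is flat as a B-module, and the natural maps A' ⊗_B N → M' and A'' ⊗_B N → M'' are isomorphisms of A'-algebras, respectively of A''-algebras. -/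
/-!
Write `J = ker (A'' → A)` and `I = ker (B → A')`. Projection to `A''` identifies `I = 0 × J` with
`J`, and `B → A'` is surjective with nilpotent kernel. The algebra structures play no role, and
the gluing is done for modules (`IsGluing`).

* `N → M'` is surjective, so the image of `N` in `M''` generates `M''` over `A''` modulo `J M''`,
  hence generates it because `J` is nilpotent. Therefore `ker (N → M') = 0 × J M''` equals `I N`,
  which gives `A' ⊗ N ≃ M'`.
* `A'' ⊗ N → M''` is surjective by the same token. After base change to `A` it becomes the
  isomorphism `A ⊗ N ≃ A ⊗ M' ≃ A ⊗ M''`, so as `M''` is flat its kernel `K` satisfies `K = J K`,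
  and `K = 0` since `J` is nilpotent.
* Flatness of `N` follows from the local criterion for the nilpotent ideal `I`
  (`flat_of_nilpotent_ker`): `A' ⊗ N ≃ M'` is flat over `A'`, and `I ⊗ N → N` is injective because
  its composite with `N → A'' ⊗ N ≃ M''` is the injection `J ⊗[A''] M'' → M''`.

The local criterion is proved without `Tor`: a submodule `X ≤ R` is joined to `R` by the chain
`X + I ^ k`, so it suffices to see that `X ⊗ N → Y ⊗ N` is injective when `I Y ≤ X ≤ Y`; for this
one may replace `Y` by a free module.
-/

open TensorProduct

set_option synthInstance.maxHeartbeats 2000000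
set_option maxHeartbeats 4000000

section FiberProduct

variable (A A' A'' : Type*) [CommRing A] [CommRing A'] [CommRing A'']
variable [Algebra A' A] [Algebra A'' A]

/-- The fibered product `B = A' ×_A A''` of rings, as a subring of `A' × A''`. -/
def fiberProduct : Subring (A' × A'') where
  carrier := {p | algebraMap A' A p.1 = algebraMap A'' A p.2}
  zero_mem' := by simp
  one_mem' := by simp
  add_mem' := by
    intro p q hp hq
    simp only [Set.mem_setOf_eq, Prod.fst_add, Prod.snd_add, map_add] at *
    rw [hp, hq]
  mul_mem' := by
    intro p q hp hq
    simp only [Set.mem_setOf_eq, Prod.fst_mul, Prod.snd_mul, map_mul] at *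
    rw [hp, hq]
  neg_mem' := by
    intro p hp
    simp only [Set.mem_setOf_eq, Prod.fst_neg, Prod.snd_neg, map_neg] at *
    rw [hp]

noncomputable instance : Algebra (fiberProduct A A' A'') A' :=
  ((RingHom.fst A' A'').comp (fiberProduct A A' A'').subtype).toAlgebra

noncomputable instance : Algebra (fiberProduct A A' A'') A'' :=
  ((RingHom.snd A' A'').comp (fiberProduct A A' A'').subtype).toAlgebra

variable (M' M'' : Type*) [CommRing M'] [Algebra A' M'] [CommRing M''] [Algebra A'' M'']

noncomputable instance (priority := 50) : Algebra (fiberProduct A A' A'') M' :=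
  ((algebraMap A' M').comp (algebraMap (fiberProduct A A' A'') A')).toAlgebra

noncomputable instance (priority := 50) : Algebra (fiberProduct A A' A'') M'' :=
  ((algebraMap A'' M'').comp (algebraMap (fiberProduct A A' A'') A'')).toAlgebra

instance : IsScalarTower (fiberProduct A A' A'') A' M' :=
  IsScalarTower.of_algebraMap_eq fun _ => rfl

instance : IsScalarTower (fiberProduct A A' A'') A'' M'' :=
  IsScalarTower.of_algebraMap_eq fun _ => rfl

end FiberProduct

section Glue

variable {A A' A'' : Type*} [CommRing A] [CommRing A'] [CommRing A'']
variable [Algebra A' A] [Algebra A'' A]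
variable {M' M'' : Type*} [CommRing M'] [Algebra A' M'] [CommRing M''] [Algebra A'' M'']

/-- The glued algebra `N = {(m', m'') : α(1 ⊗ m') = 1 ⊗ m''}`, a `B`-subalgebra of
`M' × M''`. -/
noncomputable def gluedAlgebra (α : (A ⊗[A'] M') ≃ₐ[A] (A ⊗[A''] M'')) :
    Subalgebra (fiberProduct A A' A'') (M' × M'') where
  carrier := {p | α (1 ⊗ₜ p.1) = 1 ⊗ₜ p.2}
  zero_mem' := by simp [TensorProduct.tmul_zero]
  one_mem' := by
    show α (1 ⊗ₜ (1 : M')) = 1 ⊗ₜ (1 : M'')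
    have h1 : (1 : A) ⊗ₜ (1 : M') = (1 : A ⊗[A'] M') := rfl
    have h2 : (1 : A) ⊗ₜ (1 : M'') = (1 : A ⊗[A''] M'') := rfl
    rw [h1, h2, map_one]
  add_mem' := by
    intro p q hp hq
    simp only [Set.mem_setOf_eq, Prod.fst_add, Prod.snd_add, TensorProduct.tmul_add,
      map_add] at *
    rw [hp, hq]
  mul_mem' := by
    intro p q hp hq
    simp only [Set.mem_setOf_eq, Prod.fst_mul, Prod.snd_mul] at *
    have h1 : (1 : A) ⊗ₜ[A'] (p.1 * q.1) = ((1 : A) ⊗ₜ[A'] p.1) * ((1 : A) ⊗ₜ[A'] q.1) := by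
      rw [Algebra.TensorProduct.tmul_mul_tmul, one_mul]
    have h2 : (1 : A) ⊗ₜ[A''] (p.2 * q.2) = ((1 : A) ⊗ₜ[A''] p.2) * ((1 : A) ⊗ₜ[A''] q.2) := by
      rw [Algebra.TensorProduct.tmul_mul_tmul, one_mul]
    rw [h1, h2, map_mul, hp, hq]
  algebraMap_mem' := by
    intro b
    show α ((1 : A) ⊗ₜ[A'] (algebraMap A' M' ((b : A' × A'').1))) =
      (1 : A) ⊗ₜ[A''] (algebraMap A'' M'' ((b : A' × A'').2))
    have h1 : (1 : A) ⊗ₜ[A'] (algebraMap A' M' ((b : A' × A'').1)) =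
        algebraMap A (A ⊗[A'] M') (algebraMap A' A ((b : A' × A'').1)) := by
      rw [← IsScalarTower.algebraMap_apply A' A (A ⊗[A'] M')]
      exact (Algebra.TensorProduct.includeRight : M' →ₐ[A'] A ⊗[A'] M').commutes
        ((b : A' × A'').1)
    have h2 : (1 : A) ⊗ₜ[A''] (algebraMap A'' M'' ((b : A' × A'').2)) =
        algebraMap A (A ⊗[A''] M'') (algebraMap A'' A ((b : A' × A'').2)) := by
      rw [← IsScalarTower.algebraMap_apply A'' A (A ⊗[A''] M'')]
      exact (Algebra.TensorProduct.includeRight : M'' →ₐ[A''] A ⊗[A''] M'').commutes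
        ((b : A' × A'').2)
    rw [h1, h2, α.commutes, b.2]

end Glue

section Maps

variable {A A' A'' : Type*} [CommRing A] [CommRing A'] [CommRing A'']
variable [Algebra A' A] [Algebra A'' A]
variable {M' M'' : Type*} [CommRing M'] [Algebra A' M'] [CommRing M''] [Algebra A'' M'']

/-- The natural `A'`-algebra map `A' ⊗_B N → M'`. -/
noncomputable def gluedAlgMapLeft (α : (A ⊗[A'] M') ≃ₐ[A] (A ⊗[A''] M'')) :
    (A' ⊗[fiberProduct A A' A''] ↥(gluedAlgebra α)) →ₐ[fiberProduct A A' A''] M' :=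
  Algebra.TensorProduct.productMap (IsScalarTower.toAlgHom (fiberProduct A A' A'') A' M')
    ((AlgHom.fst (fiberProduct A A' A'') M' M'').comp (gluedAlgebra α).val)

/-- The natural `A''`-algebra map `A'' ⊗_B N → M''`. -/
noncomputable def gluedAlgMapRight (α : (A ⊗[A'] M') ≃ₐ[A] (A ⊗[A''] M'')) :
    (A'' ⊗[fiberProduct A A' A''] ↥(gluedAlgebra α)) →ₐ[fiberProduct A A' A''] M'' :=
  Algebra.TensorProduct.productMap (IsScalarTower.toAlgHom (fiberProduct A A' A'') A'' M'')
    ((AlgHom.snd (fiberProduct A A' A'') M' M'').comp (gluedAlgebra α).val)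

end Maps

/-! ### The local criterion of flatness for a nilpotent ideal -/

section LocalCriterion

universe u v w

variable {R : Type u} {S : Type v} {N : Type w} [CommRing R] [CommRing S] [Algebra R S]
  [AddCommGroup N] [Module R N]

/-- The kernel of `Q → S ⊗ Q` is contained in the image of `I ⊗ Q`, where `I` is the kernel of
`R → S`. -/
theorem exists_ker_tmul_of_one_tmul_eq_zero (hs : Function.Surjective (algebraMap R S))
    {Q : Type*} [AddCommGroup Q] [Module R Q] {q : Q} (hq : (1 : S) ⊗ₜ[R] q = 0) :
    ∃ t : (RingHom.ker (algebraMap R S)) ⊗[R] Q,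
      TensorProduct.lid R Q ((RingHom.ker (algebraMap R S)).subtype.rTensor Q t) = q := by
  have hex : Function.Exact (RingHom.ker (algebraMap R S)).subtype (Algebra.linearMap R S) := by
    intro r
    simp [RingHom.mem_ker]
  have := (rTensor_exact Q hex hs (1 ⊗ₜ q)).1 (by simpa using hq)
  obtain ⟨t, ht⟩ := this
  exact ⟨t, by simp [ht]⟩

theorem mem_smul_top_of_one_tmul_eq_zero (hs : Function.Surjective (algebraMap R S))
    {Q : Type*} [AddCommGroup Q] [Module R Q] {q : Q} (hq : (1 : S) ⊗ₜ[R] q = 0) :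
    q ∈ RingHom.ker (algebraMap R S) • (⊤ : Submodule R Q) := by
  obtain ⟨t, rfl⟩ := exists_ker_tmul_of_one_tmul_eq_zero hs hq
  clear hq
  induction t with
  | zero => simp
  | add a b ha hb =>
    simp only [map_add]
    exact add_mem ha hb
  | tmul i q =>
    simpa using Submodule.smul_mem_smul i.2 (Submodule.mem_top (x := q))

/-- If `S ⊗ N` is `S`-flat then `- ⊗[R] N` preserves injectivity of `S`-linear maps, because
`Z ⊗[R] N = Z ⊗[S] (S ⊗[R] N)`. -/
theorem rTensor_restrictScalars_injective [Module.Flat S (S ⊗[R] N)]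
    {Z W : Type*} [AddCommMonoid Z] [AddCommMonoid W] [Module R Z] [Module R W] [Module S Z]
    [Module S W] [IsScalarTower R S Z] [IsScalarTower R S W] (f : Z →ₗ[S] W)
    (hf : Function.Injective f) :
    Function.Injective ((f.restrictScalars R).rTensor N) := by
  have h := Module.Flat.rTensor_preserves_injective_linearMap (M := S ⊗[R] N) f hf
  have key : ∀ t, f.rTensor (S ⊗[R] N)
      ((TensorProduct.AlgebraTensorModule.cancelBaseChange R S S Z N).symm t) =
      (TensorProduct.AlgebraTensorModule.cancelBaseChange R S S W N).symm
        ((f.restrictScalars R).rTensor N t) := by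
    intro t
    induction t with
    | zero => simp
    | add a b ha hb => simp only [map_add, ha, hb]
    | tmul z n => simp
  intro a b hab
  apply (TensorProduct.AlgebraTensorModule.cancelBaseChange R S S Z N).symm.injective
  apply h
  rw [key, key, hab]

/-- The multiplication map `I ⊗ F → F` stays injective after tensoring with `N` when `F` is flat
and `I ⊗ N → N` is injective. -/
theorem rTensor_ideal_smul_injective (I : Ideal R)
    (hI : Function.Injective (I.subtype.rTensor N))
    (F : Type*) [AddCommGroup F] [Module R F] [Module.Flat R F] :
    Function.Injective
      (((TensorProduct.lid R F).toLinearMap ∘ₗ I.subtype.rTensor F).rTensor N) := by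
  have h := Module.Flat.lTensor_preserves_injective_linearMap (M := F) _ hI
  let e₁ : (I ⊗[R] F) ⊗[R] N ≃ₗ[R] F ⊗[R] (I ⊗[R] N) :=
    (TensorProduct.comm R I F).rTensor N ≪≫ₗ TensorProduct.assoc R F I N
  let e₂ : F ⊗[R] N ≃ₗ[R] F ⊗[R] (R ⊗[R] N) := (TensorProduct.lid R N).symm.lTensor F
  have key : e₂.toLinearMap ∘ₗ
      (((TensorProduct.lid R F).toLinearMap ∘ₗ I.subtype.rTensor F).rTensor N) =
      ((I.subtype.rTensor N).lTensor F) ∘ₗ e₁.toLinearMap := by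
    ext i f n
    have hi : (i : R) ⊗ₜ[R] n = (i : R) • ((1 : R) ⊗ₜ[R] n) := by
      rw [TensorProduct.smul_tmul', smul_eq_mul, mul_one]
    have htmul : ((i : R) • f) ⊗ₜ[R] ((1 : R) ⊗ₜ[R] n) = f ⊗ₜ[R] ((i : R) ⊗ₜ[R] n) := by
      rw [hi, TensorProduct.smul_tmul]
    simpa [e₁, e₂] using htmul
  refine Function.Injective.of_comp (f := e₂) ?_
  have := congrArg (fun l : _ →ₗ[R] _ => (l : _ → _)) key
  simp only [LinearMap.coe_comp, LinearEquiv.coe_coe] at this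
  rw [this]
  exact h.comp e₁.injective

/-- Diagram chase: let `P → X → Z → 0` be exact, let `j : X → F` and let `ι : Z → W` complete a
commutative square. If `ι` and `j ∘ μ` are injective after tensoring with `N`, so is `j`. -/
theorem rTensor_injective_of_exact_of_comm {P X Z F W : Type*} [AddCommGroup P] [AddCommGroup X]
    [AddCommGroup Z] [AddCommGroup F] [AddCommGroup W] [Module R P] [Module R X] [Module R Z]
    [Module R F] [Module R W] {μ : P →ₗ[R] X} {φ : X →ₗ[R] Z} {j : X →ₗ[R] F} {ι : Z →ₗ[R] W}
    {π : F →ₗ[R] W} (hex : Function.Exact μ φ) (hφ : Function.Surjective φ)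
    (hcomm : ι ∘ₗ φ = π ∘ₗ j) (hι : Function.Injective (ι.rTensor N))
    (hμ : Function.Injective ((j ∘ₗ μ).rTensor N)) : Function.Injective (j.rTensor N) := by
  rw [injective_iff_map_eq_zero]
  intro t ht
  have hZ : φ.rTensor N t = 0 := by
    apply hι
    rw [map_zero, ← LinearMap.rTensor_comp_apply, hcomm, LinearMap.rTensor_comp_apply, ht,
      map_zero]
  obtain ⟨t, rfl⟩ := (rTensor_exact N hex hφ t).1 hZ
  rw [← LinearMap.rTensor_comp_apply] at ht
  rw [hμ (ht.trans (map_zero _).symm), map_zero]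

/-- Injectivity of `X ⊗ N → Y ⊗ N` follows from that of `X' ⊗ N → F ⊗ N`, where `X'` is the
preimage of `X` under a surjection `F → Y`. -/
theorem rTensor_injective_of_comap {X Y F : Type*} [AddCommGroup X]
    [AddCommGroup Y] [AddCommGroup F] [Module R X] [Module R Y] [Module R F]
    (f : X →ₗ[R] Y) (hf : Function.Injective f) (q : F →ₗ[R] Y) (hq : Function.Surjective q)
    (h : Function.Injective (((LinearMap.range f).comap q).subtype.rTensor N)) :
    Function.Injective (f.rTensor N) := by
  let e := LinearEquiv.ofInjective f hf
  let p : (LinearMap.range f).comap q →ₗ[R] X :=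
    e.symm.toLinearMap ∘ₗ
      (q ∘ₗ ((LinearMap.range f).comap q).subtype).codRestrict _ (fun y => y.2)
  have hfp : f ∘ₗ p = q ∘ₗ ((LinearMap.range f).comap q).subtype := by
    ext1 y
    exact congrArg Subtype.val (e.apply_symm_apply ⟨q y, y.2⟩)
  have hp : Function.Surjective p := by
    intro a
    obtain ⟨y, hy⟩ := hq (f a)
    have hy' : y ∈ (LinearMap.range f).comap q := ⟨a, hy.symm⟩
    exact ⟨⟨y, hy'⟩, hf ((LinearMap.congr_fun hfp ⟨y, hy'⟩).trans hy)⟩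
  have hK : LinearMap.ker q ≤ (LinearMap.range f).comap q :=
    fun y hy => ⟨0, by rw [map_zero]; exact hy.symm⟩
  rw [injective_iff_map_eq_zero]
  intro t ht
  obtain ⟨t, rfl⟩ := p.rTensor_surjective N hp t
  rw [← LinearMap.rTensor_comp_apply, hfp, LinearMap.rTensor_comp_apply] at ht
  obtain ⟨z, hz⟩ := (rTensor_exact N (LinearMap.exact_subtype_ker_map q) hq _).1 ht
  have hz' : t = (Submodule.inclusion hK).rTensor N z := by
    apply h
    rw [← hz, ← LinearMap.rTensor_comp_apply]
    rfl
  have h0 : p ∘ₗ Submodule.inclusion hK = 0 := by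
    ext1 y
    apply hf
    exact ((LinearMap.congr_fun hfp (Submodule.inclusion hK y)).trans y.2).trans (map_zero f).symm
  rw [hz', ← LinearMap.rTensor_comp_apply, h0, LinearMap.rTensor_zero, LinearMap.zero_apply]

/-- The image of an `R`-submodule `X` of `F` in `S ⊗ F`; it is an `S`-submodule because `R → S`
is surjective. -/
def baseChangeImage (hs : Function.Surjective (algebraMap R S))
    {F : Type*} [AddCommGroup F] [Module R F] (X : Submodule R F) : Submodule S (S ⊗[R] F) where
  carrier := {z | ∃ y ∈ X, (1 : S) ⊗ₜ[R] y = z}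
  zero_mem' := ⟨0, X.zero_mem, TensorProduct.tmul_zero _ _⟩
  add_mem' := by
    rintro _ _ ⟨a, ha, rfl⟩ ⟨b, hb, rfl⟩
    exact ⟨a + b, add_mem ha hb, TensorProduct.tmul_add _ _ _⟩
  smul_mem' := by
    rintro s _ ⟨a, ha, rfl⟩
    obtain ⟨r, rfl⟩ := hs s
    exact ⟨r • a, X.smul_mem r ha, by simp⟩

/-- If `F` is flat and `X ≤ F` contains `I • F`, then `X ⊗ N → F ⊗ N` is injective: this is
known for `I • F`, and for the `S`-submodule `X / I • F` of `F / I • F`. -/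
theorem rTensor_subtype_injective_of_flat (hs : Function.Surjective (algebraMap R S))
    [Module.Flat S (S ⊗[R] N)]
    (hI : Function.Injective ((RingHom.ker (algebraMap R S)).subtype.rTensor N))
    {F : Type*} [AddCommGroup F] [Module R F] [Module.Flat R F] (X : Submodule R F)
    (hX : ∀ i ∈ RingHom.ker (algebraMap R S), ∀ y : F, i • y ∈ X) :
    Function.Injective (X.subtype.rTensor N) := by
  let φ : X →ₗ[R] baseChangeImage hs X :=
    { toFun := fun y => ⟨1 ⊗ₜ y, y, y.2, rfl⟩
      map_add' := fun a b => Subtype.ext (TensorProduct.tmul_add _ _ _)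
      map_smul' := fun r a => Subtype.ext (TensorProduct.tmul_smul _ _ _) }
  have hφ : Function.Surjective φ := by
    rintro ⟨_, y, hy, rfl⟩
    exact ⟨⟨y, hy⟩, rfl⟩
  let m : RingHom.ker (algebraMap R S) ⊗[R] F →ₗ[R] F :=
    (TensorProduct.lid R F).toLinearMap ∘ₗ (RingHom.ker (algebraMap R S)).subtype.rTensor F
  have hm₀ : ∀ i y, m (i ⊗ₜ y) = (i : R) • y := fun i y => by simp [m]
  have hm : ∀ t, m t ∈ X := by
    intro t
    induction t with
    | zero => simp
    | add a b ha hb => rw [map_add]; exact add_mem ha hb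
    | tmul i y => rw [hm₀]; exact hX i i.2 y
  have hm₁ : ∀ t, (1 : S) ⊗ₜ[R] m t = 0 := by
    intro t
    induction t with
    | zero => simp
    | add a b ha hb => rw [map_add, TensorProduct.tmul_add, ha, hb, add_zero]
    | tmul i y =>
      rw [hm₀, ← TensorProduct.smul_tmul, Algebra.smul_def, RingHom.mem_ker.1 i.2, zero_mul,
        TensorProduct.zero_tmul]
  have hex : Function.Exact (m.codRestrict X hm) φ := by
    intro y
    constructor
    · intro h
      obtain ⟨t, ht⟩ := exists_ker_tmul_of_one_tmul_eq_zero hs (congrArg Subtype.val h)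
      exact ⟨t, Subtype.ext ht⟩
    · rintro ⟨t, rfl⟩
      exact Subtype.ext (hm₁ t)
  have hι := rTensor_restrictScalars_injective (R := R) (N := N) (baseChangeImage hs X).subtype
    (Submodule.injective_subtype _)
  have hμ : Function.Injective ((X.subtype ∘ₗ m.codRestrict X hm).rTensor N) :=
    rTensor_ideal_smul_injective _ hI F
  have hcomm : (baseChangeImage hs X).subtype.restrictScalars R ∘ₗ φ =
      TensorProduct.mk R S F 1 ∘ₗ X.subtype := LinearMap.ext fun _ => rfl
  exact rTensor_injective_of_exact_of_comm (X := X) (Z := baseChangeImage hs X) (F := F)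
    (W := S ⊗[R] F) hex hφ hcomm hι hμ

/-- `X ⊗ N → Y ⊗ N` is injective whenever `X → Y` is injective and `I` kills `Y / X`. This
expresses the vanishing of `Tor₁ (Y / X, N)`, and follows from the flat case by pulling back
along a free cover of `Y`. -/
theorem rTensor_injective_of_smul_mem_range (hs : Function.Surjective (algebraMap R S))
    [Module.Flat S (S ⊗[R] N)]
    (hI : Function.Injective ((RingHom.ker (algebraMap R S)).subtype.rTensor N))
    {X Y : Type*} [AddCommGroup X] [Module R X] [AddCommGroup Y] [Module R Y] (f : X →ₗ[R] Y)
    (hf : Function.Injective f)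
    (hX : ∀ i ∈ RingHom.ker (algebraMap R S), ∀ y : Y, i • y ∈ LinearMap.range f) :
    Function.Injective (f.rTensor N) := by
  apply rTensor_injective_of_comap f hf (Finsupp.linearCombination R id)
    (Finsupp.linearCombination_id_surjective R Y)
  apply rTensor_subtype_injective_of_flat hs hI
  intro i hi y
  rw [Submodule.mem_comap, map_smul]
  exact hX i hi _

/-- Local criterion of flatness: let `I` be the kernel of the surjection `R → S`. If `I` is
nilpotent, `S ⊗ N` is `S`-flat and `I ⊗ N → N` is injective, then `N` is `R`-flat. -/
theorem flat_of_nilpotent_ker (hs : Function.Surjective (algebraMap R S))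
    (hnil : IsNilpotent (RingHom.ker (algebraMap R S))) [Module.Flat S (S ⊗[R] N)]
    (hI : Function.Injective ((RingHom.ker (algebraMap R S)).subtype.rTensor N)) :
    Module.Flat R N := by
  have step : ∀ (k : ℕ) (X : Ideal R), RingHom.ker (algebraMap R S) ^ k ≤ X →
      Function.Injective (X.subtype.rTensor N) := by
    intro k
    induction k with
    | zero =>
      intro X hX
      obtain rfl : X = ⊤ := by simpa using hX
      exact (Submodule.topEquiv (R := R) (M := R)).rTensor N |>.injective
    | succ k ih =>
      intro X hX
      -- `X ≤ W ≤ R`, where `I` kills `W / X` and `I ^ k` kills `R / W`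
      let W : Ideal R := X ⊔ RingHom.ker (algebraMap R S) ^ k
      have hXW : X ≤ W := le_sup_left
      have h₁ := ih W le_sup_right
      have h₂ : Function.Injective ((Submodule.inclusion hXW).rTensor N) := by
        apply rTensor_injective_of_smul_mem_range hs hI _ (Submodule.inclusion_injective hXW)
        rintro i hi ⟨y, hy⟩
        rw [Submodule.range_inclusion]
        change i * y ∈ X
        obtain ⟨a, ha, b, hb, rfl⟩ := Submodule.mem_sup.1 hy
        rw [mul_add]
        refine add_mem (X.mul_mem_left _ ha) (hX ?_)
        rw [pow_succ']
        exact Ideal.mul_mem_mul hi hb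
      have : X.subtype = W.subtype ∘ₗ Submodule.inclusion hXW := rfl
      rw [this, LinearMap.rTensor_comp]
      exact h₁.comp h₂
  obtain ⟨k, hk⟩ := hnil
  rw [Module.Flat.iff_rTensor_injective']
  intro X
  exact step k X (by rw [hk]; exact bot_le)

end LocalCriterion

/-! ### Nakayama-type lemmas for a nilpotent ideal -/

theorem eq_top_of_sup_nilpotent_smul {R Q : Type*} [CommRing R] [AddCommGroup Q] [Module R Q]
    {J : Ideal R} (hJ : IsNilpotent J) (W : Submodule R Q) (h : W ⊔ J • (⊤ : Submodule R Q) = ⊤) :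
    W = ⊤ := by
  have key : ∀ k : ℕ, W ⊔ J ^ k • (⊤ : Submodule R Q) = ⊤ := by
    intro k
    induction k with
    | zero => simp
    | succ k ih =>
      have h₁ : J • (⊤ : Submodule R Q) ≤ W ⊔ J ^ (k + 1) • (⊤ : Submodule R Q) := by
        conv_lhs => rw [← ih]
        rw [Submodule.smul_sup, pow_succ', Submodule.mul_smul]
        exact sup_le_sup_right Submodule.smul_le_right _
      exact eq_top_iff.2 (h.ge.trans (sup_le le_sup_left h₁))
  obtain ⟨k, hk⟩ := hJ
  simpa [hk] using key k

theorem eq_bot_of_le_nilpotent_smul {R Q : Type*} [CommRing R] [AddCommGroup Q] [Module R Q]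
    {J : Ideal R} (hJ : IsNilpotent J) (K : Submodule R Q) (h : K ≤ J • K) : K = ⊥ := by
  have key : ∀ k : ℕ, K ≤ J ^ k • K := by
    intro k
    induction k with
    | zero => simp
    | succ k ih =>
      rw [pow_succ', Submodule.mul_smul]
      exact h.trans (Submodule.smul_mono le_rfl ih)
  obtain ⟨k, hk⟩ := hJ
  simpa [hk] using key k

/-- Let `R → S` be surjective with nilpotent kernel `J`. A surjection `l : P → Q` onto a flat module
that becomes injective after base change to `S` is injective. Indeed `S ⊗ ker l` is the kernel of
`S ⊗ l` by flatness of `Q`, so `ker l = J • ker l`. -/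
theorem injective_of_lTensor_injective {R S P Q : Type*} [CommRing R] [CommRing S] [Algebra R S]
    [AddCommGroup P] [AddCommGroup Q] [Module R P] [Module R Q] [Module.Flat R Q]
    (hsurj : Function.Surjective (algebraMap R S))
    (hnil : IsNilpotent (RingHom.ker (algebraMap R S))) (l : P →ₗ[R] Q)
    (hl : Function.Surjective l) (hlS : Function.Injective (l.lTensor S)) :
    Function.Injective l := by
  rw [← LinearMap.ker_eq_bot]
  apply eq_bot_of_le_nilpotent_smul hnil
  set J := RingHom.ker (algebraMap R S) with hJ
  intro k hk
  have hk0 : (1 : S) ⊗ₜ[R] k = 0 := by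
    apply hlS
    rw [LinearMap.lTensor_tmul, map_zero, LinearMap.mem_ker.1 hk, TensorProduct.tmul_zero]
  obtain ⟨s, rfl⟩ := exists_ker_tmul_of_one_tmul_eq_zero hsurj hk0
  have hcomm : ∀ s : J ⊗[R] P,
      TensorProduct.lid R Q (J.subtype.rTensor Q (l.lTensor J s)) =
      l (TensorProduct.lid R P (J.subtype.rTensor P s)) := by
    intro s
    induction s with
    | zero => simp
    | add a b ha hb => simp only [map_add, ha, hb]
    | tmul j t => simp
  have hls : l.lTensor J s = 0 := by
    apply Module.Flat.rTensor_preserves_injective_linearMap (M := Q) J.subtype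
      J.injective_subtype
    apply (TensorProduct.lid R Q).injective
    rw [hcomm, map_zero, map_zero]
    exact hk
  obtain ⟨r, rfl⟩ := (lTensor_exact J (LinearMap.exact_subtype_ker_map l) hl s).1 hls
  clear hls hk0 hk
  induction r with
  | zero => simp
  | add a b ha hb => simp only [map_add]; exact add_mem ha hb
  | tmul j t => simpa using Submodule.smul_mem_smul j.2 t.2

/-! ### Gluing modules over an abstract fibered product -/

/-- Modules over a cartesian square of rings: `B` is the fibered product of `A' → A ← A''`, and
`N` is the fibered product of `M'` and `M''` over `A ⊗ M' ≃ A ⊗ M''`. All the conditions are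
stated on elements. -/
structure IsGluing {B A A' A'' M' M'' N : Type*} [CommRing B] [CommRing A] [CommRing A']
    [CommRing A''] [Algebra B A'] [Algebra B A''] [Algebra A' A] [Algebra A'' A]
    [AddCommGroup M'] [AddCommGroup M''] [AddCommGroup N] [Module A' M'] [Module A'' M'']
    [Module B N] [Module B M'] [Module B M'']
    (α : (A ⊗[A'] M') ≃ₗ[A] (A ⊗[A''] M'')) (p' : N →ₗ[B] M') (p'' : N →ₗ[B] M'') : Prop where
  ring_comm : ∀ b : B, algebraMap A' A (algebraMap B A' b) = algebraMap A'' A (algebraMap B A'' b)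
  ring_ext : ∀ b : B, algebraMap B A' b = 0 → algebraMap B A'' b = 0 → b = 0
  ring_exists : ∀ (x : A') (y : A''), algebraMap A' A x = algebraMap A'' A y →
    ∃ b : B, algebraMap B A' b = x ∧ algebraMap B A'' b = y
  comm : ∀ n : N, α (1 ⊗ₜ p' n) = 1 ⊗ₜ p'' n
  ext : ∀ n : N, p' n = 0 → p'' n = 0 → n = 0
  exists_lift : ∀ (x : M') (y : M''), α (1 ⊗ₜ x) = 1 ⊗ₜ y → ∃ n : N, p' n = x ∧ p'' n = y

namespace IsGluing

variable {B A A' A'' M' M'' N : Type*} [CommRing B] [CommRing A] [CommRing A']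
    [CommRing A''] [Algebra B A'] [Algebra B A''] [Algebra A' A] [Algebra A'' A]
    [AddCommGroup M'] [AddCommGroup M''] [AddCommGroup N] [Module A' M'] [Module A'' M'']
    [Module B N] [Module B M'] [Module B M'']
    {α : (A ⊗[A'] M') ≃ₗ[A] (A ⊗[A''] M'')} {p' : N →ₗ[B] M'} {p'' : N →ₗ[B] M''}

theorem algebraMap_left_surjective (h : IsGluing α p' p'')
    (hsurj : Function.Surjective (algebraMap A'' A)) :
    Function.Surjective (algebraMap B A') := by
  intro x
  obtain ⟨y, hy⟩ := hsurj (algebraMap A' A x)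
  obtain ⟨b, hb, -⟩ := h.ring_exists x y hy.symm
  exact ⟨b, hb⟩

theorem isNilpotent_ker_left (h : IsGluing α p' p'')
    (hnil : IsNilpotent (RingHom.ker (algebraMap A'' A))) :
    IsNilpotent (RingHom.ker (algebraMap B A')) := by
  obtain ⟨k, hk⟩ := hnil
  -- for `k = 0` the ring `B` may be nonzero, so the exponent must be positive
  refine ⟨k + 1, ?_⟩
  rw [Ideal.zero_eq_bot, eq_bot_iff]
  intro b hb
  have hle : RingHom.ker (algebraMap B A') ≤
      (RingHom.ker (algebraMap A'' A)).comap (algebraMap B A'') := by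
    intro c hc
    rw [Ideal.mem_comap, RingHom.mem_ker, ← h.ring_comm, RingHom.mem_ker.1 hc, map_zero]
  apply h.ring_ext
  · exact Ideal.pow_le_self (Nat.succ_ne_zero k) hb
  · have h₁ := Ideal.le_comap_pow _ k (Ideal.pow_right_mono hle k (Ideal.pow_le_pow_right
      (Nat.le_succ k) hb))
    rw [hk] at h₁
    exact h₁

theorem left_surjective (h : IsGluing α p' p'') (hsurj : Function.Surjective (algebraMap A'' A)) :
    Function.Surjective p' := by
  intro x
  obtain ⟨y, hy⟩ := TensorProduct.mk_surjective A'' M'' A hsurj (α (1 ⊗ₜ x))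
  obtain ⟨n, hn, -⟩ := h.exists_lift x y hy.symm
  exact ⟨n, hn⟩

/-- `N` generates `M''` over `A''`: it does so modulo the nilpotent ideal `J = ker (A'' → A)`,
since `M' = p' N` generates `A ⊗ M'`. -/
theorem liftBaseChange_right_surjective [IsScalarTower B A'' M'']
    (h : IsGluing α p' p'')
    (hsurj : Function.Surjective (algebraMap A'' A))
    (hnil : IsNilpotent (RingHom.ker (algebraMap A'' A))) :
    Function.Surjective (p''.liftBaseChange A'') := by
  rw [← LinearMap.range_eq_top]
  apply eq_top_of_sup_nilpotent_smul hnil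
  rw [eq_top_iff]
  intro y _
  have key : ∀ t : A ⊗[A'] M', ∃ w ∈ LinearMap.range (p''.liftBaseChange A''),
      α t = 1 ⊗ₜ w := by
    intro t
    induction t with
    | zero => exact ⟨0, zero_mem _, by simp⟩
    | add a b ha hb =>
      obtain ⟨w, hw, ha⟩ := ha
      obtain ⟨v, hv, hb⟩ := hb
      exact ⟨w + v, add_mem hw hv, by rw [map_add, ha, hb, TensorProduct.tmul_add]⟩
    | tmul a x =>
      obtain ⟨c, rfl⟩ := hsurj a
      obtain ⟨n, rfl⟩ := h.left_surjective hsurj x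
      refine ⟨c • p'' n, ⟨c ⊗ₜ n, by simp⟩, ?_⟩
      have : (algebraMap A'' A c) ⊗ₜ[A'] p' n = algebraMap A'' A c • ((1 : A) ⊗ₜ[A'] p' n) := by
        rw [TensorProduct.smul_tmul', smul_eq_mul, mul_one]
      rw [this, map_smul, h.comm, TensorProduct.smul_tmul', smul_eq_mul, mul_one,
        ← TensorProduct.smul_tmul, Algebra.smul_def, mul_one]
  obtain ⟨w, hw, hyw⟩ := key (α.symm (1 ⊗ₜ y))
  rw [LinearEquiv.apply_symm_apply] at hyw
  have hd := mem_smul_top_of_one_tmul_eq_zero (q := y - w) hsurj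
    (by rw [TensorProduct.tmul_sub, hyw, sub_self])
  rw [← add_sub_cancel w y]
  exact Submodule.add_mem_sup hw hd

/-- The kernel of `p'` is `0 × J M''`, which equals `I N` for `I = ker (B → A') = 0 × J` because
`N` generates `M''`. -/
theorem mem_smul_top_of_left_eq_zero [IsScalarTower B A' M'] [IsScalarTower B A'' M'']
    (h : IsGluing α p' p'')
    (hsurj : Function.Surjective (algebraMap A'' A))
    (hnil : IsNilpotent (RingHom.ker (algebraMap A'' A))) {n : N} (hn : p' n = 0) :
    n ∈ RingHom.ker (algebraMap B A') • (⊤ : Submodule B N) := by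
  have hJ : ∀ y ∈ RingHom.ker (algebraMap A'' A) • (⊤ : Submodule A'' M''),
      ∃ m ∈ RingHom.ker (algebraMap B A') • (⊤ : Submodule B N), p' m = 0 ∧ p'' m = y := by
    intro y hy
    induction hy using Submodule.smul_induction_on' with
    | smul j hj y hy =>
      obtain ⟨t, rfl⟩ := h.liftBaseChange_right_surjective hsurj hnil y
      clear hy
      induction t with
      | zero => exact ⟨0, zero_mem _, by simp⟩
      | add a b ha hb =>
        obtain ⟨m, hm, hm', hm''⟩ := ha
        obtain ⟨l, hl, hl', hl''⟩ := hb
        exact ⟨m + l, add_mem hm hl, by simp [hm', hl'], by simp [hm'', hl'']⟩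
      | tmul c n =>
        have hjc : algebraMap A' A 0 = algebraMap A'' A (j * c) := by
          rw [map_zero, map_mul, RingHom.mem_ker.1 hj, zero_mul]
        obtain ⟨b, hb, hb'⟩ := h.ring_exists 0 (j * c) hjc
        refine ⟨b • n, Submodule.smul_mem_smul hb Submodule.mem_top, ?_, ?_⟩
        · rw [map_smul, ← algebraMap_smul A' b, hb, zero_smul]
        · rw [map_smul, ← algebraMap_smul A'' b, hb', mul_smul, LinearMap.liftBaseChange_tmul]
    | add a _ b _ ha hb =>
      obtain ⟨m, hm, hm', hm''⟩ := ha
      obtain ⟨l, hl, hl', hl''⟩ := hb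
      exact ⟨m + l, add_mem hm hl, by simp [hm', hl'], by simp [hm'', hl'']⟩
  have h0 : (1 : A) ⊗ₜ[A''] p'' n = 0 := by
    rw [← h.comm, hn, TensorProduct.tmul_zero, map_zero]
  obtain ⟨m, hm, hm', hm''⟩ := hJ _ (mem_smul_top_of_one_tmul_eq_zero hsurj h0)
  have : n - m = 0 := h.ext _ (by rw [map_sub, hn, hm', sub_zero]) (by rw [map_sub, hm'', sub_self])
  rwa [sub_eq_zero.1 this]

theorem liftBaseChange_left_bijective [IsScalarTower B A' M'] [IsScalarTower B A'' M'']
    (h : IsGluing α p' p'')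
    (hsurj : Function.Surjective (algebraMap A'' A))
    (hnil : IsNilpotent (RingHom.ker (algebraMap A'' A))) :
    Function.Bijective (p'.liftBaseChange A') := by
  constructor
  · rw [injective_iff_map_eq_zero]
    intro t ht
    obtain ⟨n, rfl⟩ := TensorProduct.mk_surjective B N A' (h.algebraMap_left_surjective hsurj) t
    have hn : p' n = 0 := by simpa using ht
    have hle : RingHom.ker (algebraMap B A') • (⊤ : Submodule B N) ≤
        LinearMap.ker (TensorProduct.mk B A' N 1) := by
      rw [Submodule.smul_le]
      intro i hi m _
      rw [LinearMap.mem_ker, map_smul, TensorProduct.mk_apply, TensorProduct.smul_tmul',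
        Algebra.smul_def, RingHom.mem_ker.1 hi, zero_mul, TensorProduct.zero_tmul]
    exact hle (h.mem_smul_top_of_left_eq_zero hsurj hnil hn)
  · intro x
    obtain ⟨n, rfl⟩ := h.left_surjective hsurj x
    exact ⟨1 ⊗ₜ n, by simp⟩

/-- `A ⊗ (A'' ⊗ N) → A ⊗ M''` is identified with `α`, because `A ⊗ (A'' ⊗ N) = A ⊗ (A' ⊗ N)` and
`A' ⊗ N = M'`. -/
theorem lTensor_right_injective [IsScalarTower B A' M'] [IsScalarTower B A'' M'']
    (h : IsGluing α p' p'')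
    (hsurj : Function.Surjective (algebraMap A'' A))
    (hnil : IsNilpotent (RingHom.ker (algebraMap A'' A))) :
    Function.Injective ((p''.liftBaseChange A'').lTensor A) := by
  let : Algebra B A := ((algebraMap A' A).comp (algebraMap B A')).toAlgebra
  have : IsScalarTower B A' A := IsScalarTower.of_algebraMap_eq fun _ => rfl
  have : IsScalarTower B A'' A := IsScalarTower.of_algebraMap_eq fun b => h.ring_comm b
  let e' : A' ⊗[B] N ≃ₗ[A'] M' :=
    LinearEquiv.ofBijective _ (h.liftBaseChange_left_bijective hsurj hnil)
  let e : A ⊗[A''] (A'' ⊗[B] N) ≃ₗ[A] A ⊗[A''] M'' :=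
    TensorProduct.AlgebraTensorModule.cancelBaseChange B A'' A A N ≪≫ₗ
    (TensorProduct.AlgebraTensorModule.cancelBaseChange B A' A A N).symm ≪≫ₗ
    TensorProduct.AlgebraTensorModule.congr (LinearEquiv.refl A A) e' ≪≫ₗ α
  have key : ∀ t, (p''.liftBaseChange A'').lTensor A t = e t := by
    intro t
    induction t with
    | zero => simp
    | add a b ha hb => rw [map_add, map_add, ha, hb]
    | tmul a s =>
      induction s with
      | zero => simp
      | add s r hs hr => rw [TensorProduct.tmul_add, map_add, map_add, hs, hr]
      | tmul c n =>
        have h1 : e (a ⊗ₜ (c ⊗ₜ n)) = α ((c • a) ⊗ₜ p' n) := by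
          simp [e, e']
        have h2 : (c • a) ⊗ₜ[A'] p' n = (c • a) • ((1 : A) ⊗ₜ[A'] p' n) := by
          rw [TensorProduct.smul_tmul', smul_eq_mul, mul_one]
        rw [h1, h2, map_smul, h.comm, TensorProduct.smul_tmul', smul_eq_mul, mul_one,
          TensorProduct.smul_tmul]
        simp
  intro a b hab
  rw [key, key] at hab
  exact e.injective hab

theorem liftBaseChange_right_bijective [IsScalarTower B A' M'] [IsScalarTower B A'' M'']
    [Module.Flat A'' M''] (h : IsGluing α p' p'')
    (hsurj : Function.Surjective (algebraMap A'' A))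
    (hnil : IsNilpotent (RingHom.ker (algebraMap A'' A))) :
    Function.Bijective (p''.liftBaseChange A'') :=
  have hs := h.liftBaseChange_right_surjective hsurj hnil
  ⟨injective_of_lTensor_injective hsurj hnil _ hs (h.lTensor_right_injective hsurj hnil), hs⟩

/-- `I ⊗ N → N` is injective for `I = ker (B → A')`: as `I` is the ideal `J` of `A''`, the
composite `I ⊗ N → A'' ⊗ N` is `J ⊗[A''] M'' → M''`. -/
theorem rTensor_ker_injective [IsScalarTower B A' M'] [IsScalarTower B A'' M'']
    [Module.Flat A'' M''] (h : IsGluing α p' p'')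
    (hsurj : Function.Surjective (algebraMap A'' A))
    (hnil : IsNilpotent (RingHom.ker (algebraMap A'' A))) :
    Function.Injective ((RingHom.ker (algebraMap B A')).subtype.rTensor N) := by
  let e'' : A'' ⊗[B] N ≃ₗ[A''] M'' :=
    LinearEquiv.ofBijective _ (h.liftBaseChange_right_bijective hsurj hnil)
  have : Module.Flat A'' (A'' ⊗[B] N) := Module.Flat.of_linearEquiv e''
  set J := RingHom.ker (algebraMap A'' A) with hJ
  set I := RingHom.ker (algebraMap B A') with hI
  let c : I →ₗ[B] J :=
    { toFun := fun i => ⟨algebraMap B A'' i, by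
        rw [hJ, RingHom.mem_ker, ← h.ring_comm, RingHom.mem_ker.1 i.2, map_zero]⟩
      map_add' := fun a b => Subtype.ext (by simp)
      map_smul' := fun r a => Subtype.ext (by simp [Algebra.smul_def]) }
  have hc : Function.Bijective c := by
    constructor
    · rw [injective_iff_map_eq_zero]
      intro i hi
      exact Subtype.ext (h.ring_ext i i.2 (congrArg Subtype.val hi))
    · rintro ⟨j, hj⟩
      obtain ⟨b, hb, hb'⟩ := h.ring_exists 0 j (by rw [map_zero, RingHom.mem_ker.1 hj])
      exact ⟨⟨b, hb⟩, Subtype.ext hb'⟩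
  have h₁ : Function.Injective (c.rTensor N) :=
    ((LinearEquiv.ofBijective c hc).rTensor N).injective
  have h₂ := rTensor_restrictScalars_injective (R := B) (N := N) J.subtype J.injective_subtype
  have hcomp : (J.subtype.restrictScalars B) ∘ₗ c = Algebra.linearMap B A'' ∘ₗ I.subtype :=
    LinearMap.ext fun _ => rfl
  have h₃ := h₂.comp h₁
  rw [← LinearMap.coe_comp, ← LinearMap.rTensor_comp, hcomp, LinearMap.rTensor_comp,
    LinearMap.coe_comp] at h₃
  exact h₃.of_comp

theorem flat [IsScalarTower B A' M'] [IsScalarTower B A'' M'']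
    [Module.Flat A' M'] [Module.Flat A'' M''] (h : IsGluing α p' p'')
    (hsurj : Function.Surjective (algebraMap A'' A))
    (hnil : IsNilpotent (RingHom.ker (algebraMap A'' A))) : Module.Flat B N := by
  let e' : A' ⊗[B] N ≃ₗ[A'] M' :=
    LinearEquiv.ofBijective _ (h.liftBaseChange_left_bijective hsurj hnil)
  have : Module.Flat A' (A' ⊗[B] N) := Module.Flat.of_linearEquiv e'
  exact flat_of_nilpotent_ker (h.algebraMap_left_surjective hsurj) (h.isNilpotent_ker_left hnil)
    (h.rTensor_ker_injective hsurj hnil)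

end IsGluing

/-- Flat algebras glue along a fibered product of rings `B = A' ×_A A''`
(with `A'' → A` surjective with nilpotent kernel): given flat algebras `M'/A'` and `M''/A''`
and an `A`-algebra isomorphism `α : A ⊗_{A'} M' ≅ A ⊗_{A''} M''`, the subalgebra
`N = {(m', m'') : α(1 ⊗ m') = 1 ⊗ m''}` of `M' × M''` is flat as a `B`-module and the
natural maps `A' ⊗_B N → M'` and `A'' ⊗_B N → M''` are isomorphisms of algebras. -/
theorem flat_algebras_glue
    (A A' A'' : Type*) [CommRing A] [CommRing A'] [CommRing A'']
    [Algebra A' A] [Algebra A'' A]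
    (hsurj : Function.Surjective (algebraMap A'' A))
    (hnil : IsNilpotent (RingHom.ker (algebraMap A'' A)))
    (M' M'' : Type*) [CommRing M'] [Algebra A' M'] [CommRing M''] [Algebra A'' M'']
    [Module.Flat A' M'] [Module.Flat A'' M'']
    (α : (A ⊗[A'] M') ≃ₐ[A] (A ⊗[A''] M'')) :
    Module.Flat (fiberProduct A A' A'') ↥(gluedAlgebra α) ∧
    Function.Bijective (gluedAlgMapLeft α) ∧
    Function.Bijective (gluedAlgMapRight α) := by
  have h : IsGluing (B := fiberProduct A A' A'') α.toLinearEquiv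
      ((AlgHom.fst (fiberProduct A A' A'') M' M'').comp (gluedAlgebra α).val).toLinearMap
      ((AlgHom.snd (fiberProduct A A' A'') M' M'').comp (gluedAlgebra α).val).toLinearMap :=
    { ring_comm := fun b => b.2
      ring_ext := fun b h₁ h₂ => Subtype.ext (Prod.ext h₁ h₂)
      ring_exists := fun x y hxy => ⟨⟨(x, y), hxy⟩, rfl, rfl⟩
      comm := fun n => n.2
      ext := fun n h₁ h₂ => Subtype.ext (Prod.ext h₁ h₂)
      exists_lift := fun x y hxy => ⟨⟨(x, y), hxy⟩, rfl, rfl⟩ }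
  refine ⟨h.flat hsurj hnil, ?_, ?_⟩
  · convert h.liftBaseChange_left_bijective hsurj hnil using 1
    ext t
    induction t with
    | zero => simp
    | add a b ha hb => rw [map_add, map_add, ha, hb]
    | tmul a n => simp [gluedAlgMapLeft, Algebra.smul_def]
  · convert h.liftBaseChange_right_bijective hsurj hnil using 1
    ext t
    induction t with
    | zero => simp
    | add a b ha hb => rw [map_add, map_add, ha, hb]
    | tmul a n => simp [gluedAlgMapRight, Algebra.smul_def]
end

section
/- Let k be a field, let A' → A be a small extension of Artinian local k-algebras with residue field k, and let R be a commutative k-algebra. Let M be a module over R ⊗_k A that is flat as an A-module, and set M₀ := M ⊗_A k, an R-module. If Ext²_R(M₀, M₀) = 0 (the second Ext group in the category of R-modules vanishes), then there exists a module M' over R ⊗_k A', flat as an A'-module, together with an isomorphism of (R ⊗_k A)-modules M' ⊗_{A'} A ≅ M. In other words, vanishing of Ext²_R(M₀, M₀) implies that every flat lifting of M₀ can be lifted along any small extension. -/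
/-!
Write `B = R ⊗ A`, `B' = R ⊗ A'`, `I = ker (A' → A)`, `J = I B'`, and let `m` be the extension of the
maximal ideal of `A'` to `B'`, so that `m J = 0` and `B' / m = R`. Choose free `B'`-modules
`F`, `G` and maps `q : G → F`, `p : F → M` with `p` surjective and `range q = ker p`. Since `M` and
its first syzygy over `B` are `A`-flat, reduction modulo `m` gives the beginning `G₀ → F₀ → M₀ → 0` of a free `R`-resolution of
`M₀`, whose second syzygy `L₀` is a quotient of `L = q⁻¹(J F)`.

A lift of `M` is a quotient `F / N` where `N ⊆ ker p` reduces onto the relations of `M` modulo `J`,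
and is so small that `J F / (J F ∩ N)` is all of `I ⊗ M₀ = J F / J (ker p)`. The relations
`q g`, `g ∈ G`, reduce to those of `M`, but they meet `J F` in `q(L)`. The resulting map
`L → J F → I ⊗ M₀` factors through `L₀`; it is the obstruction cocycle, whose class lies in
`I ⊗ Ext²_R(M₀, M₀)`. As this group vanishes, the cocycle extends to `Θ : G₀ → I ⊗ M₀`
(`extends_of_ext2`). Correcting each relation `q g` by an element of `J F` with class `-Θ g` produces
`N` (`exists_submodule_lift`). The choice of a `k`-basis `e` of `I` replaces `I ⊗ M₀` by copies of
`M₀` throughout.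

Flatness of `F / N` over `A'` holds in the strong form of freeness: flat `A`-modules are free because
`A` is Artinian local (`free_of_flat_of_artinian`), and a basis of `M` lifts to a basis of `F / N`
(`free_of_lift`).
-/

open TensorProduct IsLocalRing

set_option synthInstance.maxHeartbeats 1000000
set_option maxHeartbeats 1000000

attribute [local instance] Algebra.TensorProduct.rightAlgebra

universe u

/-- The natural map `R ⊗_k A' → R ⊗_k A` induced by `π : A' → A`. -/
noncomputable def tensorHom (k : Type u) [Field k] (A A' : Type u) [CommRing A] [CommRing A']
    [Algebra k A] [Algebra k A'] (π : A' →ₐ[k] A)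
    (R : Type u) [CommRing R] [Algebra k R] :
    (R ⊗[k] A') →ₐ[k] (R ⊗[k] A) :=
  Algebra.TensorProduct.map (AlgHom.id k R) π

/-! ### Vanishing of `Ext²` and freeness over Artinian local rings -/

open CategoryTheory in
/-- `Ext²_R(X, X) = 0` in elementary terms: for some projective resolution of `X`, every degree-two
cocycle with values in `X` is a coboundary. -/
theorem exists_resolution_of_ext2 (R : Type u) [CommRing R] (X : Type u) [AddCommGroup X]
    [Module R X] (hext : Subsingleton (((Ext R (ModuleCat.{u} R) 2).obj
          (Opposite.op (ModuleCat.of R X))).obj (ModuleCat.of R X))) :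
    ∃ (P₀ P₁ P₂ P₃ : ModuleCat.{u} R) (η : P₀ →ₗ[R] X) (d₁ : P₁ →ₗ[R] P₀) (d₂ : P₂ →ₗ[R] P₁)
      (d₃ : P₃ →ₗ[R] P₂),
      Module.Projective R P₀ ∧ Module.Projective R P₁ ∧ Module.Projective R P₂ ∧
      Function.Surjective η ∧ Function.Exact d₁ η ∧ Function.Exact d₂ d₁ ∧
      (∀ x, d₂ (d₃ x) = 0) ∧
      ∀ f : P₂ →ₗ[R] X, f ∘ₗ d₃ = 0 → ∃ g : P₁ →ₗ[R] X, g ∘ₗ d₂ = f := by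
  let P := ProjectiveResolution.of (ModuleCat.of R X)
  have hz : Limits.IsZero ((P.complex.linearYonedaObj R (ModuleCat.of R X)).homology 2) := by
    refine Limits.IsZero.of_iso ?_ (P.isoExt 2 (ModuleCat.of R X)).symm
    exact ModuleCat.isZero_of_subsingleton _
  rw [← HomologicalComplex.exactAt_iff_isZero_homology,
    HomologicalComplex.exactAt_iff' _ 1 2 3 (by simp) (by simp)] at hz
  rw [ShortComplex.moduleCat_exact_iff] at hz
  refine ⟨P.complex.X 0, P.complex.X 1, P.complex.X 2, P.complex.X 3, (P.π.f 0).hom,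
    (P.complex.d 1 0).hom, (P.complex.d 2 1).hom, (P.complex.d 3 2).hom,
    ?_, ?_, ?_, ?_, ?_, ?_, ?_, ?_⟩
  · exact (IsProjective.iff_projective _ ).2 (P.projective 0)
  · exact (IsProjective.iff_projective _ ).2 (P.projective 1)
  · exact (IsProjective.iff_projective _ ).2 (P.projective 2)
  · exact (ModuleCat.epi_iff_surjective (P.π.f 0)).1 inferInstance
  · have := P.exact₀
    exact (ShortComplex.ShortExact.moduleCat_exact_iff_function_exact _).1 this
  · have := P.exact_succ 0
    exact (ShortComplex.ShortExact.moduleCat_exact_iff_function_exact _).1 this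
  · intro x
    have := P.complex.d_comp_d 3 2 1
    exact congrArg (fun f => f.hom x) this
  · intro f hf
    obtain ⟨g, hg⟩ := hz (ModuleCat.ofHom f) (by
      change P.complex.d 3 2 ≫ ModuleCat.ofHom f = 0
      ext x
      exact LinearMap.congr_fun hf x)
    refine ⟨g.hom, ?_⟩
    change P.complex.d 2 1 ≫ g = ModuleCat.ofHom f at hg
    exact congrArg (fun f => f.hom) hg

/-- A map from a projective module into the middle of an exact sequence lifts if it dies on the
right. -/
theorem exists_lift_exact {R : Type*} [CommRing R] {P X Y Z : Type*} [AddCommGroup P] [Module R P]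
    [AddCommGroup X] [Module R X] [AddCommGroup Y] [Module R Y] [AddCommGroup Z] [Module R Z]
    [Module.Projective R P] {f : X →ₗ[R] Y} {g : Y →ₗ[R] Z} (h : Function.Exact f g)
    (u : P →ₗ[R] Y) (hu : ∀ x, g (u x) = 0) : ∃ v : P →ₗ[R] X, ∀ x, f (v x) = u x := by
  have hm : ∀ x, u x ∈ LinearMap.range f := fun x => (h _).1 (hu x)
  obtain ⟨v, hv⟩ := Module.projective_lifting_property f.rangeRestrict (u.codRestrict _ hm)
    f.surjective_rangeRestrict
  refine ⟨v, fun x => ?_⟩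
  simpa using congrArg Subtype.val (LinearMap.congr_fun hv x)

/-- `Ext²_R(X, X) = 0`, read on an arbitrary start `G → F → X → 0` of a projective resolution: every
map from the second syzygy `ker d` to `X` extends to `G`. The chosen presentation is compared with
the one computing `Ext` by chain maps `α`, `β` in both directions and a homotopy `h`. -/
theorem extends_of_ext2 (R : Type u) [CommRing R] (X : Type u) [AddCommGroup X] [Module R X]
    (hext : Subsingleton (((Ext R (ModuleCat.{u} R) 2).obj
          (Opposite.op (ModuleCat.of R X))).obj (ModuleCat.of R X)))
    {F G : Type*} [AddCommGroup F] [Module R F] [AddCommGroup G] [Module R G]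
    [Module.Projective R F] [Module.Projective R G] (ε : F →ₗ[R] X) (d : G →ₗ[R] F)
    (hε : Function.Surjective ε) (hd : Function.Exact d ε)
    (φ : LinearMap.ker d →ₗ[R] X) : ∃ θ : G →ₗ[R] X, ∀ l : LinearMap.ker d, θ l = φ l := by
  obtain ⟨P₀, P₁, P₂, P₃, η, d₁, d₂, d₃, _, _, _, hη, h1, h2, h3, hH⟩ :=
    exists_resolution_of_ext2 R X hext
  have hsub : Function.Exact (LinearMap.ker d).subtype d := by
    intro y; simp
  obtain ⟨α₀, hα₀⟩ := Module.projective_lifting_property ε η hε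
  obtain ⟨β₀, hβ₀⟩ := Module.projective_lifting_property η ε hη
  replace hα₀ := LinearMap.congr_fun hα₀
  replace hβ₀ := LinearMap.congr_fun hβ₀
  simp only [LinearMap.comp_apply] at hα₀ hβ₀
  obtain ⟨α₁, hα₁⟩ := exists_lift_exact hd (α₀ ∘ₗ d₁) (fun x => by
    simp [hα₀, h1.apply_apply_eq_zero])
  obtain ⟨β₁, hβ₁⟩ := exists_lift_exact h1 (β₀ ∘ₗ d) (fun x => by
    simp [hβ₀, hd.apply_apply_eq_zero])
  obtain ⟨α₂, hα₂⟩ := exists_lift_exact hsub (α₁ ∘ₗ d₂) (fun x => by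
    simp [hα₁, h2.apply_apply_eq_zero])
  obtain ⟨h₀, hh₀⟩ := exists_lift_exact hd (α₀ ∘ₗ β₀ - LinearMap.id) (fun x => by
    simp [hα₀, hβ₀])
  obtain ⟨h₁, hh₁⟩ := exists_lift_exact hsub (α₁ ∘ₗ β₁ - LinearMap.id - h₀ ∘ₗ d) (fun x => by
    simp [hα₁, hβ₁, hh₀])
  simp only [LinearMap.comp_apply, LinearMap.sub_apply, LinearMap.id_apply,
    Submodule.subtype_apply] at *
  obtain ⟨ψ, hψ⟩ := hH (φ ∘ₗ α₂) (by
    ext x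
    have : α₂ (d₃ x) = 0 := by
      apply Subtype.ext
      simp [hα₂, h3]
    simp [this])
  replace hψ := LinearMap.congr_fun hψ
  refine ⟨ψ ∘ₗ β₁ - φ ∘ₗ h₁, fun l => ?_⟩
  obtain ⟨y, hy⟩ := (h2 (β₁ l)).1 (by simp [hβ₁])
  have e : h₁ (l : G) = α₂ y - l := by
    apply Subtype.ext
    simp [hh₁, hα₂, hy]
  have := hψ y
  simp only [LinearMap.comp_apply, hy] at this
  simp [e, this]

theorem exists_factor {R : Type*} [CommRing R] {X Y Z : Type*}
    [AddCommGroup X] [Module R X] [AddCommGroup Y] [Module R Y] [AddCommGroup Z] [Module R Z]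
    (f : X →ₗ[R] Y) (hf : Function.Surjective f) (g : X →ₗ[R] Z) (h : ∀ x, f x = 0 → g x = 0) :
    ∃ v : Y →ₗ[R] Z, ∀ x, v (f x) = g x := by
  refine ⟨(LinearMap.ker f).liftQ g (fun x hx => h x hx) ∘ₗ
    (f.quotKerEquivOfSurjective hf).symm, fun x => ?_⟩
  have : (f.quotKerEquivOfSurjective hf).symm (f x) = (LinearMap.ker f).mkQ x := by
    rw [LinearEquiv.symm_apply_eq]; simp
  simp only [LinearMap.comp_apply, LinearEquiv.coe_coe, this, Submodule.mkQ_apply]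
  exact Submodule.liftQ_apply _ _ _

/-- Flat modules, finitely generated or not, over an Artinian local ring are free: lifts of a
basis of the special fibre are independent by flatness and span because the maximal ideal is
nilpotent. -/
theorem free_of_flat_of_artinian (A : Type u) [CommRing A] [IsArtinianRing A] [IsLocalRing A]
    (M : Type u) [AddCommGroup M] [Module A M] [Module.Flat A M] : Module.Free A M := by
  let w := Module.Free.chooseBasis (ResidueField A) (ResidueField A ⊗[A] M)
  obtain ⟨v, eq⟩ := (TensorProduct.mk_surjective A M (ResidueField A)
    IsLocalRing.residue_surjective).comp_left w
  replace eq : TensorProduct.mk A (ResidueField A) M 1 ∘ v = w := eq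
  refine .of_basis <| .mk (Module.IsLocalRing.linearIndependent_of_flat v
    (by rw [eq]; exact w.linearIndependent)) ?_
  set C := Submodule.span A (Set.range v)
  have h1 : (⊤ : Submodule A M) ≤ C ⊔ maximalIdeal A • ⊤ := by
    intro m _
    have hw : (1 : ResidueField A) ⊗ₜ[A] m ∈ Submodule.span (ResidueField A) (Set.range w) := by
      rw [w.span_eq]; trivial
    have key : ∀ z ∈ Submodule.span (ResidueField A) (Set.range w),
        ∃ c ∈ C, (1 : ResidueField A) ⊗ₜ[A] c = z := by
      intro z hz
      induction hz using Submodule.span_induction with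
      | mem x hx =>
        obtain ⟨i, rfl⟩ := hx
        exact ⟨v i, Submodule.subset_span ⟨i, rfl⟩, congrFun eq i⟩
      | zero => exact ⟨0, C.zero_mem, by simp⟩
      | add x y _ _ hx hy =>
        obtain ⟨c, hc, rfl⟩ := hx
        obtain ⟨c', hc', rfl⟩ := hy
        exact ⟨c + c', C.add_mem hc hc', by simp [tmul_add]⟩
      | smul a x _ hx =>
        obtain ⟨c, hc, rfl⟩ := hx
        obtain ⟨a, rfl⟩ := IsLocalRing.residue_surjective a
        refine ⟨a • c, C.smul_mem _ hc, ?_⟩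
        rw [← ResidueField.algebraMap_eq, algebraMap_smul, tmul_smul]
    obtain ⟨c, hc, hcm⟩ := key _ hw
    have : m - c ∈ maximalIdeal A • (⊤ : Submodule A M) := by
      have := LinearMap.ker_tensorProductMk (R := A) (Q := M) (I := maximalIdeal A)
      rw [← this, LinearMap.mem_ker, map_sub, sub_eq_zero]
      exact hcm.symm
    rw [← sub_add_cancel m c, add_comm]
    exact Submodule.add_mem_sup hc this
  obtain ⟨n, hn⟩ := IsArtinianRing.isNilpotent_jacobson_bot (R := A)
  rw [IsLocalRing.jacobson_eq_maximalIdeal ⊥ bot_ne_top] at hn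
  have h2 : ∀ j : ℕ, (⊤ : Submodule A M) ≤ C ⊔ maximalIdeal A ^ j • ⊤ := by
    intro j
    induction j with
    | zero => simp
    | succ j ih =>
      refine ih.trans (sup_le le_sup_left ?_)
      refine (Submodule.smul_mono le_rfl h1).trans ?_
      rw [Submodule.smul_sup, ← Submodule.mul_smul, ← pow_succ]
      exact sup_le_sup_right Submodule.smul_le_right _
  simpa [hn] using h2 n

/-! ### The obstruction cocycle and its trivialisation -/

section Core

variable {R B : Type u} [CommRing R] [CommRing B] [Algebra R B]

theorem mapRange_smul (ρ : B →ₐ[R] R) {S : Type u} (b : B) (x : S →₀ B) :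
    Finsupp.mapRange.linearMap ρ.toLinearMap (b • x) =
      ρ b • Finsupp.mapRange.linearMap ρ.toLinearMap x := by
  ext s; simp

theorem mapRange_eq_zero_of_mem (ρ : B →ₐ[R] R) {m : Ideal B} (hρm : ∀ b ∈ m, ρ b = 0)
    {S : Type u} {x : S →₀ B} (hx : x ∈ m • (⊤ : Submodule B (S →₀ B))) :
    Finsupp.mapRange.linearMap ρ.toLinearMap x = 0 := by
  induction hx using Submodule.smul_induction_on' with
  | smul b hb n hn => rw [mapRange_smul, hρm b hb, zero_smul]
  | add x _ y _ hx hy => rw [map_add, hx, hy, add_zero]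

theorem sub_mapRange_mem (ρ : B →ₐ[R] R) {m : Ideal B}
    (hmρ : ∀ b, b - algebraMap R B (ρ b) ∈ m) {S : Type u} (x : S →₀ B) :
    x - Finsupp.mapRange.linearMap (Algebra.linearMap R B)
      (Finsupp.mapRange.linearMap ρ.toLinearMap x) ∈ m • (⊤ : Submodule B (S →₀ B)) := by
  induction x using Finsupp.induction_linear with
  | zero => simp
  | add x y hx hy =>
    simp only [map_add]
    rw [add_sub_add_comm]
    exact add_mem hx hy
  | single s b =>
    have : Finsupp.single s b - Finsupp.mapRange.linearMap (Algebra.linearMap R B)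
      (Finsupp.mapRange.linearMap ρ.toLinearMap (Finsupp.single s b)) =
        (b - algebraMap R B (ρ b)) • Finsupp.single s (1 : B) := by
      simp [sub_smul, Algebra.smul_def]
    rw [this]
    exact Submodule.smul_mem_smul (hmρ b) trivial

/-- The obstruction argument. Here `B` plays the role of `R ⊗ A'`, with `m` the extension of the
maximal ideal of `A'` and `J` the extension of the kernel of `A' → A`; the `e i` generate `J`, and
`lam j` reads off the coefficient of `e j`, reduced modulo `m`. Given a presentation
`(T →₀ B) → (S →₀ B) → M → 0`, the conclusion provides a submodule `N` of `ker p` that has the same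
image as `ker p` modulo `J`, but meets `J • (S →₀ B)` only in `J • (ker p + m • (S →₀ B))`, so that
`(S →₀ B) ⧸ N` is the desired lift. The conditions `h4a` and `h4b` are the consequences of flatness
of `M` and of its first syzygy that make the reduction of the presentation modulo `m` exact. -/
theorem exists_submodule_lift (ρ : B →ₐ[R] R) (m J : Ideal B)
    (hρm : ∀ b ∈ m, ρ b = 0) (hmρ : ∀ b, b - algebraMap R B (ρ b) ∈ m) (hJm : J ≤ m)
    (hmJ : m * J = ⊥)
    {ι : Type*} [Fintype ι] [DecidableEq ι] (e : ι → B) (heJ : J = Ideal.span (Set.range e))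
    (lam : ι → B →ₗ[R] R) (hlam : ∀ i j b, lam j (e i * b) = if i = j then ρ b else 0)
    {M : Type u} [AddCommGroup M] [Module B M] [Module R M] [IsScalarTower R B M]
    (hJM : ∀ b ∈ J, ∀ y : M, b • y = 0)
    {S T : Type u} (p : (S →₀ B) →ₗ[B] M) (hp : Function.Surjective p)
    (q : (T →₀ B) →ₗ[B] (S →₀ B)) (hq : LinearMap.range q = LinearMap.ker p)
    (h4a : ∀ x ∈ LinearMap.ker p, x ∈ m • (⊤ : Submodule B (S →₀ B)) →
      x ∈ m • LinearMap.ker p ⊔ J • ⊤)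
    (h4b : ∀ g ∈ m • (⊤ : Submodule B (T →₀ B)), q g ∈ J • (⊤ : Submodule B (S →₀ B)) →
      g ∈ m • (J • (⊤ : Submodule B (S →₀ B))).comap q ⊔ J • ⊤)
    {X : Type u} [AddCommGroup X] [Module R X] (ε : M →ₗ[R] X) (hεs : Function.Surjective ε)
    (hε : ∀ y, ε y = 0 ↔ y ∈ m • (⊤ : Submodule B M))
    (hext : Subsingleton (((Ext R (ModuleCat.{u} R) 2).obj
          (Opposite.op (ModuleCat.of R X))).obj (ModuleCat.of R X))) :
    ∃ N ≤ LinearMap.ker p, LinearMap.ker p ≤ N ⊔ J • ⊤ ∧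
      ∀ x : ι → (S →₀ B), ∑ i, e i • x i ∈ N → ∀ j, p (x j) ∈ m • (⊤ : Submodule B M) := by
  have he : ∀ i, e i ∈ J := fun i => heJ ▸ Ideal.subset_span ⟨i, rfl⟩
  have hmJs : ∀ {Y : Type u} [AddCommGroup Y] [Module B Y], ∀ c ∈ m, ∀ z ∈ J • (⊤ : Submodule B Y),
      c • z = 0 := by
    intro Y _ _ c hc z hz
    have : c • z ∈ m • J • (⊤ : Submodule B Y) := Submodule.smul_mem_smul hc hz
    rw [← Submodule.mul_smul, hmJ] at this
    simpa using this
  have hJK : J • (⊤ : Submodule B (S →₀ B)) ≤ LinearMap.ker p := by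
    rw [Submodule.smul_le]
    intro b hb y _
    simp [hJM b hb]
  -- reductions modulo `m` and their canonical sections
  let redF : (S →₀ B) →ₗ[R] (S →₀ R) := Finsupp.mapRange.linearMap ρ.toLinearMap
  let redG : (T →₀ B) →ₗ[R] (T →₀ R) := Finsupp.mapRange.linearMap ρ.toLinearMap
  let iF : (S →₀ R) →ₗ[R] (S →₀ B) := Finsupp.mapRange.linearMap (Algebra.linearMap R B)
  let iG : (T →₀ R) →ₗ[R] (T →₀ B) := Finsupp.mapRange.linearMap (Algebra.linearMap R B)
  have redF0 : ∀ x ∈ m • (⊤ : Submodule B (S →₀ B)), redF x = 0 := fun x hx =>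
    mapRange_eq_zero_of_mem ρ hρm hx
  have redG0 : ∀ x ∈ m • (⊤ : Submodule B (T →₀ B)), redG x = 0 := fun x hx =>
    mapRange_eq_zero_of_mem ρ hρm hx
  have subF : ∀ x, x - iF (redF x) ∈ m • (⊤ : Submodule B (S →₀ B)) := sub_mapRange_mem ρ hmρ
  have subG : ∀ x, x - iG (redG x) ∈ m • (⊤ : Submodule B (T →₀ B)) := sub_mapRange_mem ρ hmρ
  have redF_iF : ∀ y, redF (iF y) = y := by
    intro y; ext s; simp [redF, iF]
  have redG_iG : ∀ y, redG (iG y) = y := by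
    intro y; ext s; simp [redG, iG]
  have redF_mem : ∀ x, redF x = 0 → x ∈ m • (⊤ : Submodule B (S →₀ B)) := by
    intro x hx
    simpa [hx] using subF x
  have redG_mem : ∀ x, redG x = 0 → x ∈ m • (⊤ : Submodule B (T →₀ B)) := by
    intro x hx
    simpa [hx] using subG x
  have map_mem : ∀ {Y Z : Type u} [AddCommGroup Y] [Module B Y] [AddCommGroup Z] [Module B Z]
      (f : Y →ₗ[B] Z) (a : Ideal B) (x : Y), x ∈ a • (⊤ : Submodule B Y) →
      f x ∈ a • (⊤ : Submodule B Z) := by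
    intro Y Z _ _ _ _ f a x hx
    have := Submodule.mem_map_of_mem (f := f) hx
    rw [Submodule.map_smul''] at this
    exact Submodule.smul_mono le_rfl le_top this
  have map_memK : ∀ (a : Ideal B) (x : T →₀ B), x ∈ a • (⊤ : Submodule B (T →₀ B)) →
      q x ∈ a • LinearMap.ker p := by
    intro a x hx
    have := Submodule.mem_map_of_mem (f := q) hx
    rwa [Submodule.map_smul'', Submodule.map_top, hq] at this
  -- the induced presentation of the special fibre
  let ε₀ : (S →₀ R) →ₗ[R] X := ε ∘ₗ (p.restrictScalars R) ∘ₗ iF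
  let d : (T →₀ R) →ₗ[R] (S →₀ R) := redF ∘ₗ (q.restrictScalars R) ∘ₗ iG
  have hε₀ : ∀ x, ε₀ (redF x) = ε (p x) := by
    intro x
    have := (hε _).2 (map_mem p m _ (subF x))
    rw [map_sub, map_sub, sub_eq_zero] at this
    exact this.symm
  have hd : ∀ g, d (redG g) = redF (q g) := by
    intro g
    have := redF0 _ (map_mem q m _ (subG g))
    rw [map_sub, map_sub, sub_eq_zero] at this
    exact this.symm
  have hε₀s : Function.Surjective ε₀ := by
    intro y
    obtain ⟨z, rfl⟩ := hεs y
    obtain ⟨x, rfl⟩ := hp z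
    exact ⟨redF x, hε₀ x⟩
  have hexact : Function.Exact d ε₀ := by
    intro y
    constructor
    · intro hy
      rw [← redF_iF y, hε₀, hε] at hy
      have : p (iF y) ∈ (m • (⊤ : Submodule B (S →₀ B))).map p := by
        rwa [Submodule.map_smul'', Submodule.map_top, LinearMap.range_eq_top.2 hp]
      obtain ⟨z, hz, hzy⟩ := this
      have : iF y - z ∈ LinearMap.range q := by
        rw [hq, LinearMap.mem_ker, map_sub, hzy, sub_self]
      obtain ⟨g, hg⟩ := this
      refine ⟨redG g, ?_⟩
      rw [hd, hg, map_sub, redF_iF, redF0 z hz, sub_zero]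
    · rintro ⟨g, rfl⟩
      rw [← redG_iG g, hd, hε₀]
      have : q (iG g) ∈ LinearMap.ker p := hq ▸ ⟨_, rfl⟩
      rw [LinearMap.mem_ker.1 this, map_zero]
  -- coordinates on `J • F` with values in the special fibre
  let τ : ι → (S →₀ B) →ₗ[R] X := fun j => ε₀ ∘ₗ Finsupp.mapRange.linearMap (lam j)
  have hτ : ∀ i j x, τ j (e i • x) = if i = j then ε (p x) else 0 := by
    intro i j x
    have : Finsupp.mapRange.linearMap (lam j) (e i • x) = if i = j then redF x else 0 := by
      ext s
      have := hlam i j (x s)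
      split_ifs at this ⊢ <;> simpa [redF] using this
    simp only [τ, LinearMap.comp_apply, this]
    split_ifs
    · exact hε₀ x
    · simp
  have hτK : ∀ j, ∀ z ∈ J • LinearMap.ker p, τ j z = 0 := by
    intro j z hz
    induction hz using Submodule.smul_induction_on' with
    | add x _ y _ hx hy => rw [map_add, hx, hy, add_zero]
    | smul b hb y hy =>
      rw [heJ] at hb
      induction hb using Submodule.span_induction generalizing y with
      | mem b hb =>
        obtain ⟨i, rfl⟩ := hb
        rw [hτ, LinearMap.mem_ker.1 hy]
        simp
      | zero => simp
      | add b c _ _ hb hc => rw [add_smul, map_add, hb y hy, hc y hy, add_zero]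
      | smul a b _ hb =>
        rw [smul_eq_mul, mul_comm, mul_smul]
        exact hb _ (Submodule.smul_mem _ _ hy)
  -- the obstruction cocycle and its trivialisation
  let L := (J • (⊤ : Submodule B (S →₀ B))).comap q
  have hL : ∀ l ∈ L, d (redG l) = 0 := by
    intro l hl
    rw [hd]
    exact redF0 _ (Submodule.smul_mono_left hJm hl)
  have hΘ : ∀ j, ∃ Θ : (T →₀ R) →ₗ[R] X, ∀ l ∈ L, Θ (redG l) = τ j (q l) := by
    intro j
    -- `L` surjects onto the second syzygy of the special fibre, and the cocycle
    -- `l ↦ τ j (q l)` factors through this surjection.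
    let f : L.restrictScalars R →ₗ[R] LinearMap.ker d :=
      (redG ∘ₗ (L.restrictScalars R).subtype).codRestrict _ (fun l => hL l l.2)
    have hf : Function.Surjective f := by
      rintro ⟨y, hy⟩
      rw [LinearMap.mem_ker, ← redG_iG y, hd] at hy
      have h1 := h4a (q (iG y)) (hq ▸ ⟨_, rfl⟩) (redF_mem _ hy)
      rw [← hq, ← Submodule.map_top, ← Submodule.map_smul''] at h1
      obtain ⟨_, ⟨g, hg, rfl⟩, z, hz, hgz⟩ := Submodule.mem_sup.1 h1
      refine ⟨⟨iG y - g, ?_⟩, Subtype.ext ?_⟩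
      · change q (iG y - g) ∈ J • (⊤ : Submodule B (S →₀ B))
        rw [map_sub, ← hgz, add_sub_cancel_left]
        exact hz
      · change redG (iG y - g) = y
        rw [map_sub, redG0 g hg, redG_iG, sub_zero]
    let g : L.restrictScalars R →ₗ[R] X :=
      τ j ∘ₗ (q.restrictScalars R) ∘ₗ (L.restrictScalars R).subtype
    have hfg : ∀ l, f l = 0 → g l = 0 := by
      rintro ⟨l, hl⟩ h0
      have h0' : redG l = 0 := congrArg Subtype.val h0
      have h1 := h4b l (redG_mem l h0') hl
      obtain ⟨a, ha, b, hb, rfl⟩ := Submodule.mem_sup.1 h1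
      have ha' : q a = 0 := by
        have := Submodule.mem_map_of_mem (f := q) ha
        rw [Submodule.map_smul''] at this
        have := Submodule.smul_mono (le_refl m) (Submodule.map_comap_le _ _) this
        rw [← Submodule.mul_smul, hmJ] at this
        simpa using this
      change τ j (q (a + b)) = 0
      rw [map_add, ha', zero_add]
      exact hτK j _ (map_memK J b hb)
    obtain ⟨φ, hφ⟩ := exists_factor (R := R) (X := L.restrictScalars R)
      (Y := LinearMap.ker d) (Z := X) f hf g hfg
    obtain ⟨θ, hθ⟩ := extends_of_ext2 R X hext ε₀ d hε₀s hexact φ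
    refine ⟨θ, fun l hl => ?_⟩
    have h1 := hθ (f ⟨l, hl⟩)
    rw [hφ] at h1
    exact h1
  choose Θ hΘ using hΘ
  -- `N` is spanned by the relations `q g`, each corrected by an element of `J • F` with
  -- coordinates `-Θ j g`. The choice of `g` does not matter, because for `q g ∈ J • F` the
  -- coordinates of `q g` and `Θ j g` agree.
  let N : Submodule B (S →₀ B) :=
    { carrier := {x | x ∈ LinearMap.ker p ∧ ∃ g, x - q g ∈ J • (⊤ : Submodule B (S →₀ B)) ∧
        ∀ j, τ j (x - q g) = - Θ j (redG g)}
      zero_mem' := ⟨zero_mem _, 0, by simp, by simp⟩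
      add_mem' := by
        rintro x y ⟨hx, g, hg, hg'⟩ ⟨hy, h, hh, hh'⟩
        refine ⟨add_mem hx hy, g + h, ?_, fun j => ?_⟩
        · rw [map_add, add_sub_add_comm]; exact add_mem hg hh
        · rw [map_add, add_sub_add_comm, map_add, hg', hh', map_add, map_add, neg_add]
      smul_mem' := by
        rintro b x ⟨hx, g, hg, hg'⟩
        refine ⟨Submodule.smul_mem _ _ hx, b • g, ?_, fun j => ?_⟩
        · rw [map_smul, ← smul_sub]; exact Submodule.smul_mem _ _ hg
        · rw [map_smul, ← smul_sub]
          have h1 : b • (x - q g) = ρ b • (x - q g) := by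
            have := hmJs _ (hmρ b) _ hg
            rwa [sub_smul, sub_eq_zero, algebraMap_smul] at this
          have h2 : redG (b • g) = ρ b • redG g := mapRange_smul ρ b g
          rw [h1, h2, map_smul, map_smul, hg', smul_neg] }
  refine ⟨N, fun x hx => hx.1, ?_, ?_⟩
  · intro y hy
    have : y ∈ LinearMap.range q := hq ▸ hy
    obtain ⟨g, rfl⟩ := this
    have hz : ∀ j, ∃ z, ε (p z) = - Θ j (redG g) := fun j => by
      obtain ⟨y, hy⟩ := hεs (- Θ j (redG g))
      obtain ⟨z, rfl⟩ := hp y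
      exact ⟨z, hy⟩
    choose z hz using hz
    have hzJ : ∑ i, e i • z i ∈ J • (⊤ : Submodule B (S →₀ B)) :=
      sum_mem fun i _ => Submodule.smul_mem_smul (he i) trivial
    rw [← add_sub_cancel_right (q g) (∑ i, e i • z i), sub_eq_add_neg]
    refine Submodule.add_mem_sup ⟨add_mem hy (hJK hzJ), g, ?_, fun j => ?_⟩ (neg_mem hzJ)
    · rwa [add_sub_cancel_left]
    · rw [add_sub_cancel_left, map_sum]
      simp [hτ, hz]
  · rintro x ⟨_, g, hg, hg'⟩ j
    have hxJ : ∑ i, e i • x i ∈ J • (⊤ : Submodule B (S →₀ B)) :=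
      sum_mem fun i _ => Submodule.smul_mem_smul (he i) trivial
    have hgL : g ∈ L := by
      change q g ∈ J • (⊤ : Submodule B (S →₀ B))
      rw [← sub_sub_cancel (∑ i, e i • x i) (q g)]
      exact sub_mem hxJ hg
    have h1 := hg' j
    rw [hΘ j g hgL, map_sub, map_sum, sub_eq_neg_self] at h1
    simp only [hτ, Finset.sum_ite_eq', Finset.mem_univ, if_true] at h1
    exact (hε _).1 h1

end Core

/-! ### Flatness along a small extension -/

/-- If `p : X → Y` is a surjection onto an `A`-flat module, semilinear along `π : A' → A`, then
`𝔞 X ∩ ker p ⊆ 𝔞 (ker p) + (ker π) X` for every ideal `𝔞` of `A'`. This is the equational criterion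
of flatness applied to the image under `p` of a relation. -/
theorem mem_smul_ker_of_flat {A A' B X Y : Type*} [CommRing A] [CommRing A'] [CommRing B]
    [Algebra A' B] [AddCommGroup X] [Module B X] [Module A' X] [IsScalarTower A' B X]
    [AddCommGroup Y] [Module A Y] [Module.Flat A Y]
    (π : A' →+* A) (hπ : Function.Surjective π) (p : X →+ Y)
    (hp : ∀ (a : A') x, p (a • x) = π a • p x) (hps : Function.Surjective p)
    (K : Submodule B X) (hK : ∀ x, x ∈ K ↔ p x = 0) (a : Ideal A')
    {x : X} (hx : x ∈ a.map (algebraMap A' B) • (⊤ : Submodule B X)) (hpx : p x = 0) :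
    x ∈ a.map (algebraMap A' B) • K ⊔ (RingHom.ker π).map (algebraMap A' B) • ⊤ := by
  have hx' : x ∈ a • (⊤ : Submodule A' X) := by
    have := Ideal.smul_restrictScalars a (⊤ : Submodule B X)
    rw [Submodule.restrictScalars_top] at this
    rw [← this]
    exact hx
  obtain ⟨n, c, y, hc, rfl⟩ : ∃ (n : ℕ) (c : Fin n → A') (y : Fin n → X), (∀ i, c i ∈ a) ∧
      x = ∑ i, c i • y i := by
    clear hx hpx
    induction hx' using Submodule.smul_induction_on' with
    | smul r hr z _ => exact ⟨1, fun _ => r, fun _ => z, fun _ => hr, by simp⟩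
    | add x _ y _ hx hy =>
      obtain ⟨n, c, u, hc, rfl⟩ := hx
      obtain ⟨n', c', u', hc', rfl⟩ := hy
      refine ⟨n + n', Fin.append c c', Fin.append u u', fun i => ?_, ?_⟩
      · induction i using Fin.addCases with
        | left i => simpa using hc i
        | right i => simpa using hc' i
      · simp [Fin.sum_univ_add]
  rw [map_sum] at hpx
  simp only [hp] at hpx
  obtain ⟨l, b, z, h1, h2⟩ := Module.Flat.isTrivialRelation_of_sum_smul_eq_zero hpx
  choose b' hb' using fun i j => hπ (b i j)
  choose z' hz' using fun j => hps (z j)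
  have hsm : ∀ (J : Ideal A') (N : Submodule B X) (r : A') (w : X), r ∈ J → w ∈ N →
      r • w ∈ J.map (algebraMap A' B) • N := by
    intro J N r w hr hw
    rw [← algebraMap_smul B r w]
    exact Submodule.smul_mem_smul (Ideal.mem_map_of_mem _ hr) hw
  have key : ∑ i, c i • y i = ∑ i, c i • (y i - ∑ j, b' i j • z' j) +
      ∑ j, (∑ i, c i * b' i j) • z' j := by
    simp only [smul_sub, Finset.sum_sub_distrib, Finset.smul_sum, Finset.sum_smul, mul_smul]
    rw [Finset.sum_comm (γ := Fin l), sub_add_cancel]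
  rw [key]
  refine Submodule.add_mem_sup (sum_mem fun i _ => hsm _ _ _ _ (hc i) ?_)
    (sum_mem fun j _ => hsm _ _ _ _ ?_ trivial)
  · have h1i : p (y i) = ∑ j, b i j • z j := h1 i
    rw [hK, map_sub, map_sum, h1i, sub_eq_zero]
    simp [hp, hb', hz']
  · rw [RingHom.mem_ker, map_sum]
    simpa [hb'] using h2 j

/-- A form of the local criterion of flatness along a square-zero extension `A' → A`: with `I` the
kernel, spanned over `k` by the `e i`, a lift `M'` of a free module `M` is free if its reduction
modulo `I` is `M` and a relation `∑ e i • x i = 0` in `M'` forces every `x i` to vanish in the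
special fibre of `M`. Lifts of an `A`-basis of `M` form an `A'`-basis. -/
theorem free_of_lift {k A A' M M' ι : Type*} [Field k] [CommRing A] [CommRing A'] [IsLocalRing A]
    [Algebra k A] [Algebra k A'] (π : A' →ₐ[k] A) (hπ : Function.Surjective π)
    (hI2 : RingHom.ker π * RingHom.ker π = ⊥) [Fintype ι] (e : ι → A')
    (he : ∀ a ∈ RingHom.ker π, ∃ c : ι → k, a = ∑ i, c i • e i)
    [AddCommGroup M] [Module A M] [Module.Free A M] [AddCommGroup M'] [Module A' M']
    (f : M' →+ M) (hf : ∀ (a : A') x, f (a • x) = π a • f x) (hfs : Function.Surjective f)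
    (hker : ∀ x, f x = 0 → x ∈ RingHom.ker π • (⊤ : Submodule A' M'))
    (hinj : ∀ x : ι → M', ∑ i, e i • x i = 0 →
      ∀ j, f (x j) ∈ maximalIdeal A • (⊤ : Submodule A M)) :
    Module.Free A' M' := by
  classical
  let b := Module.Free.chooseBasis A M
  choose b' hb' using fun s => hfs (b s)
  refine .of_basis (.mk (v := b') ?_ ?_)
  · rw [linearIndependent_iff']
    intro t g hg
    have h1 : ∑ s ∈ t, π (g s) • b s = 0 := by
      have := congrArg f hg
      simpa [map_sum, hf, hb'] using this
    have h2 : ∀ s ∈ t, g s ∈ RingHom.ker π := fun s hs =>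
      linearIndependent_iff'.1 b.linearIndependent t _ h1 s hs
    choose c hc using fun s : t => he (g s) (h2 s s.2)
    have h3 : ∑ i, e i • (∑ s : t, algebraMap k A' (c s i) • b' s) = 0 := by
      rw [← hg, ← Finset.sum_coe_sort t]
      simp only [Finset.smul_sum]
      rw [Finset.sum_comm]
      refine Finset.sum_congr rfl fun s _ => ?_
      rw [hc s, Finset.sum_smul]
      refine Finset.sum_congr rfl fun i _ => ?_
      rw [smul_smul, Algebra.smul_def, mul_comm]
    have h4 := hinj _ h3
    have h5 : ∀ (s : t) i, c s i = 0 := by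
      intro s i
      have h6 := h4 i
      simp only [map_sum, hf, hb', AlgHom.commutes] at h6
      have h7 : ∀ y ∈ maximalIdeal A • (⊤ : Submodule A M), b.coord s y ∈ maximalIdeal A := by
        intro y hy
        induction hy using Submodule.smul_induction_on' with
        | smul r hr z _ => simpa using Ideal.mul_mem_right _ _ hr
        | add x _ y _ hx hy => rw [map_add]; exact add_mem hx hy
      have h8 := h7 _ h6
      have h9 : b.coord s (∑ s : t, algebraMap k A (c s i) • b s) = algebraMap k A (c s i) := by
        rw [map_sum]
        simp only [map_smul, Module.Basis.coord_apply, Module.Basis.repr_self, smul_eq_mul]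
        rw [Finset.sum_eq_single s]
        · simp
        · intro u _ hu
          rw [Finsupp.single_apply, if_neg (fun h => hu (Subtype.ext h)), mul_zero]
        · simp
      rw [h9] at h8
      by_contra h0
      exact ((mem_maximalIdeal _).1 h8) ((IsUnit.mk0 _ h0).map _)
    intro s hs
    rw [hc ⟨s, hs⟩]
    simp [h5]
  · set C := Submodule.span A' (Set.range b')
    have h1 : (⊤ : Submodule A' M') ≤ C ⊔ RingHom.ker π • ⊤ := by
      intro x _
      have : ∀ y ∈ Submodule.span A (Set.range b), ∃ c ∈ C, f c = y := by
        intro y hy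
        induction hy using Submodule.span_induction with
        | mem x hx =>
          obtain ⟨i, rfl⟩ := hx
          exact ⟨b' i, Submodule.subset_span ⟨i, rfl⟩, hb' i⟩
        | zero => exact ⟨0, C.zero_mem, by simp⟩
        | add x y _ _ hx hy =>
          obtain ⟨c, hc, rfl⟩ := hx
          obtain ⟨c', hc', rfl⟩ := hy
          exact ⟨c + c', C.add_mem hc hc', by simp⟩
        | smul a x _ hx =>
          obtain ⟨c, hc, rfl⟩ := hx
          obtain ⟨a, rfl⟩ := hπ a
          exact ⟨a • c, C.smul_mem _ hc, hf _ _⟩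
      obtain ⟨c, hc, hcx⟩ := this (f x) (by rw [b.span_eq]; trivial)
      rw [← sub_add_cancel x c, add_comm]
      exact Submodule.add_mem_sup hc (hker _ (by rw [map_sub, hcx, sub_self]))
    refine h1.trans (sup_le le_rfl ?_)
    refine (Submodule.smul_mono le_rfl h1).trans ?_
    rw [Submodule.smul_sup, ← Submodule.mul_smul, hI2]
    simpa using Submodule.smul_le_right

theorem nonempty_baseChange_equiv {B B' M M' : Type*} [CommRing B] [CommRing B'] [Algebra B' B]
    (hs : Function.Surjective (algebraMap B' B)) [AddCommGroup M] [Module B M]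
    [AddCommGroup M'] [Module B' M'] (f : M' →+ M)
    (hf : ∀ (b : B') x, f (b • x) = algebraMap B' B b • f x) (hfs : Function.Surjective f)
    (hker : ∀ x, f x = 0 → x ∈ RingHom.ker (algebraMap B' B) • (⊤ : Submodule B' M')) :
    Nonempty ((B ⊗[B'] M') ≃ₗ[B] M) := by
  let _ : Module B' M := Module.compHom M (algebraMap B' B)
  have : IsScalarTower B' B M := ⟨fun x y z => by
    rw [Algebra.smul_def, mul_smul]; rfl⟩
  let f' : M' →ₗ[B'] M := { f with map_smul' := hf }
  let F : B ⊗[B'] M' →ₗ[B] M := TensorProduct.AlgebraTensorModule.lift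
    { toFun := fun b => b • f'
      map_add' := fun x y => add_smul x y _
      map_smul' := fun x y => by simp [mul_smul] }
  have hF : ∀ b m, F (b ⊗ₜ m) = b • f m := fun b m => rfl
  have hone : ∀ z : B ⊗[B'] M', ∃ m, z = 1 ⊗ₜ m := by
    intro z
    induction z with
    | zero => exact ⟨0, by simp⟩
    | add x y hx hy =>
      obtain ⟨m, rfl⟩ := hx
      obtain ⟨m', rfl⟩ := hy
      exact ⟨m + m', by rw [tmul_add]⟩
    | tmul b m =>
      obtain ⟨b, rfl⟩ := hs b
      exact ⟨b • m, by rw [tmul_smul, smul_tmul', Algebra.smul_def, mul_one]⟩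
  refine ⟨LinearEquiv.ofBijective F ⟨?_, ?_⟩⟩
  · rw [injective_iff_map_eq_zero]
    intro z hz
    obtain ⟨m, rfl⟩ := hone z
    rw [hF, one_smul] at hz
    have := hker m hz
    clear hz
    induction this using Submodule.smul_induction_on' with
    | smul r hr z _ =>
      rw [tmul_smul, smul_tmul', Algebra.smul_def, mul_one, RingHom.mem_ker.1 hr, zero_tmul]
    | add x _ y _ hx hy => rw [tmul_add, hx, hy, add_zero]
  · intro y
    obtain ⟨m, rfl⟩ := hfs y
    exact ⟨1 ⊗ₜ m, by rw [hF, one_smul]⟩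

/-! ### Small extensions and the ring `R ⊗ A` -/

/-- The residue map of a local `k`-algebra with residue field `k`, with values in `k` itself. -/
theorem exists_residue (k A : Type*) [Field k] [CommRing A] [IsLocalRing A] [Algebra k A]
    (hres : Function.Bijective (algebraMap k (ResidueField A))) :
    ∃ r : A →ₐ[k] k, ∀ a, r a = 0 ↔ a ∈ maximalIdeal A := by
  let E := AlgEquiv.ofBijective (Algebra.ofId k (ResidueField A)) hres
  refine ⟨E.symm.toAlgHom.comp (IsScalarTower.toAlgHom k A (ResidueField A)), fun a => ?_⟩
  change E.symm (algebraMap A (ResidueField A) a) = 0 ↔ _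
  rw [EmbeddingLike.map_eq_zero_iff, ResidueField.algebraMap_eq, residue_eq_zero_iff]

/-- The maximal ideal kills `I`, so `A` acts on `I` through its residue field. -/
theorem mul_eq_residue_smul {k A : Type*} [Field k] [CommRing A] [IsLocalRing A] [Algebra k A]
    (r : A →ₐ[k] k) (hr : ∀ a, r a = 0 ↔ a ∈ maximalIdeal A) (I : Ideal A)
    (hI : maximalIdeal A * I = ⊥) (a : A) {x : A} (hx : x ∈ I) : a * x = r a • x := by
  have h1 : a - algebraMap k A (r a) ∈ maximalIdeal A := by
    rw [← hr]; simp
  have h2 : (a - algebraMap k A (r a)) * x ∈ maximalIdeal A * I := Ideal.mul_mem_mul h1 hx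
  rw [hI, Ideal.mem_bot, sub_mul, sub_eq_zero] at h2
  rw [h2, Algebra.smul_def]

/-- A finite `k`-basis `e` of an ideal killed by the maximal ideal, together with linear extensions
`l` to all of `A` of its coordinate functions. -/
theorem exists_coordinates {k A : Type*} [Field k] [CommRing A] [IsArtinianRing A] [IsLocalRing A]
    [Algebra k A] (r : A →ₐ[k] k) (hr : ∀ a, r a = 0 ↔ a ∈ maximalIdeal A) (I : Ideal A)
    (hI : maximalIdeal A * I = ⊥) :
    ∃ (n : ℕ) (e : Fin n → A) (l : Fin n → A →ₗ[k] k), (∀ i, e i ∈ I) ∧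
      (∀ a ∈ I, a = ∑ i, l i a • e i) ∧ ∀ i j, l j (e i) = if i = j then 1 else 0 := by
  classical
  let V : Submodule k A := I.restrictScalars k
  have hfin : V.FG := by
    obtain ⟨s, hs⟩ := (isNoetherian_def.1 (inferInstance : IsNoetherian A A)) I
    refine ⟨s, le_antisymm ?_ ?_⟩
    · rw [Submodule.span_le]
      intro x hx
      change x ∈ I
      rw [← hs]
      exact Submodule.subset_span hx
    · intro x hx
      have hx' : x ∈ Submodule.span A (s : Set A) := by rw [hs]; exact hx
      clear hx
      induction hx' using Submodule.span_induction with
      | mem x hx => exact Submodule.subset_span hx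
      | zero => exact zero_mem _
      | add x y _ _ hx hy => exact add_mem hx hy
      | smul a x hx' hx =>
        rw [smul_eq_mul, mul_eq_residue_smul r hr I hI a (hs ▸ hx')]
        exact Submodule.smul_mem _ _ hx
  have : Module.Finite k V := Module.Finite.iff_fg.2 hfin
  let b := Module.finBasis k V
  choose l hl using fun i => LinearMap.exists_extend (b.coord i)
  have hl' : ∀ i (x : V), l i x = b.repr x i := fun i x => LinearMap.congr_fun (hl i) x
  refine ⟨_, fun i => (b i : A), l, fun i => (b i).2, fun a ha => ?_, fun i j => ?_⟩
  · have h := congrArg Subtype.val (b.sum_repr ⟨a, ha⟩)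
    simp only [Submodule.coe_sum, Submodule.coe_smul] at h
    refine h.symm.trans (Finset.sum_congr rfl fun i _ => ?_)
    rw [← hl' i ⟨a, ha⟩]
  · rw [hl', b.repr_self, Finsupp.single_apply]

theorem finsupp_mem_smul_top {B : Type*} [CommRing B] {S : Type*} (J : Ideal B) (x : S →₀ B)
    (hx : ∀ s, x s ∈ J) : x ∈ J • (⊤ : Submodule B (S →₀ B)) := by
  rw [← Finsupp.sum_single x]
  refine sum_mem fun s _ => ?_
  have : Finsupp.single s (x s) = x s • Finsupp.single s (1 : B) := by simp
  rw [this]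
  exact Submodule.smul_mem_smul (hx s) trivial

theorem flat_rightAlgebra (k A R : Type*) [Field k] [CommRing A] [CommRing R] [Algebra k A]
    [Algebra k R] : Module.Flat A (R ⊗[k] A) := by
  let E : (R ⊗[k] A) ≃ₗ[A] (A ⊗[k] R) :=
    { TensorProduct.comm k R A with
      map_smul' := fun a x => by
        simp only [AddHom.toFun_eq_coe, LinearMap.coe_toAddHom, RingHom.id_apply,
          LinearEquiv.coe_coe]
        induction x with
        | zero => simp
        | add x y hx hy =>
          simp only [smul_add, map_add, hx, hy]
        | tmul r b =>
          rw [Algebra.smul_def, Algebra.TensorProduct.right_algebraMap_apply,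
            Algebra.TensorProduct.tmul_mul_tmul, one_mul, TensorProduct.comm_tmul,
            TensorProduct.comm_tmul, smul_tmul', smul_eq_mul] }
  exact Module.Flat.of_linearEquiv E

/-- The first syzygy of a flat module is flat: as `M` is `A`-free, the syzygy is a direct summand
over `A` of a free `B`-module. -/
theorem flat_ker {A B M S : Type u} [CommRing A] [IsArtinianRing A] [IsLocalRing A]
    [CommRing B] [Algebra A B] [Module.Flat A B] [AddCommGroup M] [Module A M] [Module B M]
    [IsScalarTower A B M] [Module.Flat A M] (p : (S →₀ B) →ₗ[B] M) (hp : Function.Surjective p) :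
    Module.Flat A (LinearMap.ker p) := by
  have := free_of_flat_of_artinian A M
  have : Module.Flat A (S →₀ B) := Module.Flat.trans A B _
  obtain ⟨s, hs⟩ := Module.projective_lifting_property (p.restrictScalars A) LinearMap.id hp
  replace hs : ∀ y, p (s y) = y := LinearMap.congr_fun hs
  refine Module.Flat.of_retract (R := A) (M := S →₀ B)
    ((LinearMap.ker p).subtype.restrictScalars A)
    { toFun := fun x => ⟨x - s (p x), by simp [hs]⟩
      map_add' := fun x y => Subtype.ext (by simp [add_sub_add_comm])
      map_smul' := fun a x => Subtype.ext (by
        have : p (a • x) = a • p x := (p.restrictScalars A).map_smul a x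
        simp [this, smul_sub]) } ?_
  ext1 x
  apply Subtype.ext
  simp

/-! ### The lifting theorem -/

theorem mem_map_smul_top_iff_aux {A B M : Type*} [CommRing A] [CommRing B] [AddCommGroup M]
    [Module A M] [Module B M] (φ : A →+* B) (h : ∀ (a : A) (y : M), φ a • y = a • y)
    (I : Ideal A) (y : M) :
    y ∈ I.map φ • (⊤ : Submodule B M) ↔ y ∈ I • (⊤ : Submodule A M) := by
  algebraize [φ]
  have : IsScalarTower A B M := ⟨fun a b z => by
    rw [Algebra.smul_def, mul_smul]; exact h a _⟩
  have := Ideal.smul_restrictScalars I (⊤ : Submodule B M)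
  rw [Submodule.restrictScalars_top] at this
  rw [← this]
  rfl

/-- If `φ a` and `π a` act on `M` in the same way, the extensions of an ideal along `φ` and `π` have
the same product with `M`. -/
theorem mem_map_smul_top_iff {A A' B M : Type*} [CommRing A] [CommRing A'] [CommRing B]
    [AddCommGroup M] [Module A M] [Module B M] (π : A' →+* A) (φ : A' →+* B)
    (h : ∀ (a : A') (y : M), φ a • y = π a • y) (I : Ideal A') (y : M) :
    y ∈ I.map φ • (⊤ : Submodule B M) ↔ y ∈ I.map π • (⊤ : Submodule A M) := by
  let _ : Module A' M := Module.compHom M π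
  rw [mem_map_smul_top_iff_aux φ (fun a y => h a y), mem_map_smul_top_iff_aux π (fun a y => rfl)]

theorem tmul_one_eq_zero_iff {A M : Type*} [CommRing A] [IsLocalRing A] [AddCommGroup M]
    [Module A M] (y : M) :
    y ⊗ₜ[A] (1 : ResidueField A) = 0 ↔ y ∈ maximalIdeal A • (⊤ : Submodule A M) := by
  have h := LinearMap.ker_tensorProductMk (R := A) (Q := M) (I := maximalIdeal A)
  rw [← h, LinearMap.mem_ker, ← (TensorProduct.comm A M (ResidueField A)).map_eq_zero_iff]
  rfl

theorem tmul_one_surjective {A M : Type*} [CommRing A] [IsLocalRing A] [AddCommGroup M]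
    [Module A M] (z : M ⊗[A] ResidueField A) : ∃ y : M, y ⊗ₜ 1 = z := by
  induction z with
  | zero => exact ⟨0, by simp⟩
  | add x y hx hy =>
    obtain ⟨m, rfl⟩ := hx
    obtain ⟨m', rfl⟩ := hy
    exact ⟨m + m', by rw [add_tmul]⟩
  | tmul y c =>
    obtain ⟨a, rfl⟩ := residue_surjective c
    refine ⟨a • y, ?_⟩
    rw [smul_tmul, ← ResidueField.algebraMap_eq, Algebra.smul_def, mul_one]

/-- The lifting theorem for rings `B' → B` with the formal properties of `R ⊗ A' → R ⊗ A`. The lift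
`M'` is described by its reduction map `f : M' → M`, semilinear along `σ`, surjective, and with kernel
contained in `(ker σ) M'`; as a module over `A'` it is free. -/
theorem exists_lift_of_ext2 {k A A' R B B' M : Type u} [Field k] [CommRing A] [CommRing A']
    [IsArtinianRing A] [IsLocalRing A] [IsLocalRing A'] [Algebra k A] [Algebra k A']
    (π : A' →ₐ[k] A) (hπ : Function.Surjective π)
    (hsmall : maximalIdeal A' * RingHom.ker π = ⊥)
    [CommRing R] [CommRing B] [CommRing B'] [Algebra R B] [Algebra R B'] [Algebra A B]
    [Algebra A' B'] [Module.Flat A B]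
    (σ : B' →+* B) (hσ : Function.Surjective σ)
    (hσA : ∀ a, σ (algebraMap A' B' a) = algebraMap A B (π a))
    (hσR : ∀ r, σ (algebraMap R B' r) = algebraMap R B r)
    (hσk : RingHom.ker σ = (RingHom.ker π).map (algebraMap A' B'))
    (ρ : B' →ₐ[R] R)
    (hρm : ∀ b ∈ (maximalIdeal A').map (algebraMap A' B'), ρ b = 0)
    (hmρ : ∀ b, b - algebraMap R B' (ρ b) ∈ (maximalIdeal A').map (algebraMap A' B'))
    {ι : Type*} [Fintype ι] [DecidableEq ι] (e : ι → A') (heI : ∀ i, e i ∈ RingHom.ker π)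
    (he : ∀ a ∈ RingHom.ker π, ∃ c : ι → k, a = ∑ i, c i • e i)
    (lam : ι → B' →ₗ[R] R)
    (hlam : ∀ i j b, lam j (algebraMap A' B' (e i) * b) = if i = j then ρ b else 0)
    [AddCommGroup M] [Module B M] [Module A M] [IsScalarTower A B M] [Module R M]
    [IsScalarTower R B M] [SMulCommClass A R M] [Module.Flat A M]
    (hext : Subsingleton
      (((Ext R (ModuleCat.{u} R) 2).obj
          (Opposite.op (ModuleCat.of R (M ⊗[A] ResidueField A)))).obj
        (ModuleCat.of R (M ⊗[A] ResidueField A)))) :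
    ∃ (M' : ModuleCat.{u} B') (f : M' →+ M), (∀ (b : B') x, f (b • x) = σ b • f x) ∧
      Function.Surjective f ∧
      (∀ x, f x = 0 → x ∈ RingHom.ker σ • (⊤ : Submodule B' M')) ∧
      letI : Module A' M' := Module.compHom M' (algebraMap A' B')
      Module.Free A' M' := by
  classical
  have hfree : Module.Free A M := free_of_flat_of_artinian A M
  have hImm : RingHom.ker π ≤ maximalIdeal A' :=
    IsLocalRing.le_maximalIdeal (RingHom.ker_ne_top π)
  have hmapm : (maximalIdeal A').map (π : A' →+* A) = maximalIdeal A :=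
    IsLocalRing.map_maximalIdeal_of_surjective (π : A' →+* A) hπ
  have hI2 : RingHom.ker π * RingHom.ker π = ⊥ :=
    le_bot_iff.1 (hsmall ▸ Ideal.mul_mono_left hImm)
  set m : Ideal B' := (maximalIdeal A').map (algebraMap A' B') with hm
  set J : Ideal B' := (RingHom.ker π).map (algebraMap A' B') with hJ
  have hmJ : m * J = ⊥ := by rw [hm, hJ, ← Ideal.map_mul, hsmall, Ideal.map_bot]
  let _ : Module B' M := Module.compHom M σ
  have hB'M : ∀ (b : B') (y : M), b • y = σ b • y := fun _ _ => rfl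
  have hA'M : ∀ (a : A') (y : M), algebraMap A' B' a • y = π a • y := fun a y => by
    rw [hB'M, hσA, algebraMap_smul]
  have : IsScalarTower R B' M := ⟨fun r b y => by
    rw [hB'M, hB'M, Algebra.smul_def, map_mul, hσR, mul_smul, algebraMap_smul]⟩
  have hJM : ∀ b ∈ J, ∀ y : M, b • y = 0 := fun b hb y => by
    rw [← hσk] at hb
    rw [hB'M, RingHom.mem_ker.1 hb, zero_smul]
  have heJ : J = Ideal.span (Set.range fun i => algebraMap A' B' (e i)) := by
    refine le_antisymm (Ideal.map_le_iff_le_comap.2 fun a ha => ?_) (Ideal.span_le.2 ?_)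
    · obtain ⟨c, rfl⟩ := he a ha
      rw [Ideal.mem_comap, map_sum]
      refine sum_mem fun i _ => ?_
      rw [Algebra.smul_def, map_mul]
      exact Ideal.mul_mem_left _ _ (Ideal.subset_span ⟨i, rfl⟩)
    · rintro _ ⟨i, rfl⟩
      exact Ideal.mem_map_of_mem _ (heI i)
  let p : (M →₀ B') →ₗ[B'] M := Finsupp.linearCombination B' id
  have hp : Function.Surjective p := fun y => ⟨Finsupp.single y 1, by simp [p]⟩
  let q : (LinearMap.ker p →₀ B') →ₗ[B'] (M →₀ B') := Finsupp.linearCombination B' Subtype.val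
  have hq : LinearMap.range q = LinearMap.ker p := by
    rw [Finsupp.range_linearCombination, Subtype.range_coe]
    exact Submodule.span_eq _
  -- the reduction of the presentation modulo `J`
  let pb : (M →₀ B) →ₗ[B] M := Finsupp.linearCombination B id
  have hpb : Function.Surjective pb := fun y => ⟨Finsupp.single y 1, by simp [pb]⟩
  have : Module.Flat A (LinearMap.ker pb) := flat_ker pb hpb
  let red : (M →₀ B') →+ (M →₀ B) := Finsupp.mapRange.addMonoidHom σ.toAddMonoidHom
  have hredapp : ∀ x s, red x s = σ (x s) := fun x s => rfl
  have hredsmul : ∀ (b : B') x, red (b • x) = σ b • red x := fun b x => by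
    ext s; simp [hredapp]
  have hreds : Function.Surjective red := Finsupp.mapRange_surjective _ (map_zero _) hσ
  have hpred : ∀ x, pb (red x) = p x := fun x => by
    induction x using Finsupp.induction_linear with
    | zero => simp
    | add x y hx hy => simp only [map_add, hx, hy]
    | single s b => simp [red, p, pb, hB'M]
  have hredJ : ∀ x, red x = 0 ↔ x ∈ J • (⊤ : Submodule B' (M →₀ B')) := fun x => by
    constructor
    · intro h
      refine finsupp_mem_smul_top J x fun s => ?_
      rw [← hσk, RingHom.mem_ker, ← hredapp, h, Finsupp.zero_apply]
    · intro h
      induction h using Submodule.smul_induction_on' with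
      | smul b hb n _ =>
        rw [← hσk] at hb
        rw [hredsmul, RingHom.mem_ker.1 hb, zero_smul]
      | add x _ y _ hx hy => rw [map_add, hx, hy, add_zero]
  have h4a : ∀ x ∈ LinearMap.ker p, x ∈ m • (⊤ : Submodule B' (M →₀ B')) →
      x ∈ m • LinearMap.ker p ⊔ J • ⊤ := fun x hx hxm =>
    mem_smul_ker_of_flat (A := A) (π : A' →+* A) hπ p.toAddMonoidHom
      (fun a x => by
        change p (a • x) = π a • p x
        rw [← algebraMap_smul B' a x, map_smul, hA'M]) hp
      (LinearMap.ker p) (fun _ => Iff.rfl) (maximalIdeal A') hxm hx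
  let qb : (LinearMap.ker p →₀ B') →+ LinearMap.ker pb :=
    { toFun := fun g => ⟨red (q g), by
        rw [LinearMap.mem_ker, hpred]; exact hq.le ⟨g, rfl⟩⟩
      map_zero' := Subtype.ext (by simp)
      map_add' := fun g h => Subtype.ext (by simp) }
  have hqb : Function.Surjective qb := by
    rintro ⟨z, hz⟩
    obtain ⟨x, rfl⟩ := hreds z
    have hx : x ∈ LinearMap.range q := by
      rw [hq, LinearMap.mem_ker, ← hpred]; exact hz
    obtain ⟨g, rfl⟩ := hx
    exact ⟨g, rfl⟩
  have hqb0 : ∀ g, g ∈ (J • (⊤ : Submodule B' (M →₀ B'))).comap q ↔ qb g = 0 := fun g => by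
    rw [Submodule.mem_comap, ← hredJ, Subtype.ext_iff]; rfl
  have h4b : ∀ g ∈ m • (⊤ : Submodule B' (LinearMap.ker p →₀ B')),
      q g ∈ J • (⊤ : Submodule B' (M →₀ B')) →
      g ∈ m • (J • (⊤ : Submodule B' (M →₀ B'))).comap q ⊔ J • ⊤ := fun g hg hgq =>
    mem_smul_ker_of_flat (A := A) (π : A' →+* A) hπ qb
      (fun a x => Subtype.ext <| by
        change red (q (a • x)) = π a • red (q x)
        rw [← algebraMap_smul B' a x, map_smul, hredsmul, hσA, algebraMap_smul]) hqb
      _ hqb0 (maximalIdeal A') hg ((hqb0 g).1 hgq)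
  let ε : M →ₗ[R] M ⊗[A] ResidueField A :=
    { toFun := fun y => y ⊗ₜ 1
      map_add' := fun x y => add_tmul x y _
      map_smul' := fun r y => rfl }
  have hmM : ∀ y : M, y ∈ m • (⊤ : Submodule B' M) ↔ y ∈ maximalIdeal A • (⊤ : Submodule A M) :=
    fun y => by
      rw [hm, mem_map_smul_top_iff (π : A' →+* A) (algebraMap A' B') hA'M, hmapm]
  obtain ⟨N, hN, hKN, hNm⟩ := exists_submodule_lift ρ m J hρm hmρ (Ideal.map_mono hImm) hmJ
    (fun i => algebraMap A' B' (e i)) heJ lam hlam hJM p hp q hq h4a h4b ε tmul_one_surjective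
    (fun y => (tmul_one_eq_zero_iff y).trans (hmM y).symm) hext
  let f : ((M →₀ B') ⧸ N) →ₗ[B'] M := N.liftQ p hN
  have hfs : Function.Surjective f := fun y => by
    obtain ⟨x, rfl⟩ := hp y
    exact ⟨N.mkQ x, by simp [f]⟩
  have hfk : ∀ x, f x = 0 → x ∈ J • (⊤ : Submodule B' ((M →₀ B') ⧸ N)) := fun x hx => by
    obtain ⟨x, rfl⟩ := N.mkQ_surjective x
    have hx' : x ∈ LinearMap.ker p := by simpa [f] using hx
    obtain ⟨n, hn, j, hj, rfl⟩ := Submodule.mem_sup.1 (hKN hx')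
    have h1 : N.mkQ n = 0 := by simpa using hn
    rw [map_add, h1, zero_add]
    have := Submodule.mem_map_of_mem (f := N.mkQ) hj
    rw [Submodule.map_smul''] at this
    exact Submodule.smul_mono le_rfl le_top this
  refine ⟨ModuleCat.of B' ((M →₀ B') ⧸ N), f.toAddMonoidHom, fun b x => f.map_smul b x, hfs,
    hσk ▸ hfk, ?_⟩
  let _ : Module A' (ModuleCat.of B' ((M →₀ B') ⧸ N)) := Module.compHom _ (algebraMap A' B')
  refine free_of_lift π hπ hI2 e he f.toAddMonoidHom (fun a x => ?_) hfs (fun x hx => ?_)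
    fun x hx j => ?_
  · exact (f.map_smul (algebraMap A' B' a) x).trans (hA'M a _)
  · exact (mem_map_smul_top_iff_aux (algebraMap A' B') (fun _ _ => rfl) _ x).1 (hfk x hx)
  · choose y hy using fun i => N.mkQ_surjective (x i)
    have h0 : ∑ i, algebraMap A' B' (e i) • y i ∈ N := by
      rw [← Submodule.Quotient.mk_eq_zero, ← Submodule.mkQ_apply, map_sum]
      simp only [map_smul, hy]
      exact hx
    have := (hmM _).1 (hNm y h0 j)
    rw [← hy j]
    exact this

/-- **Statement 16.**  Let `A' → A` be a small extension of artinian local `k`-algebras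
with residue field `k`, `R` a commutative `k`-algebra, and `M` a module over `R ⊗ₖ A`
which is flat over `A`, with special fiber `M₀ = M ⊗_A k`.  If `Ext²_R(M₀, M₀) = 0`, then
`M` lifts to a module `M'` over `R ⊗ₖ A'`, flat over `A'`, whose base change
`M' ⊗_{A'} A` is isomorphic to `M` as an `R ⊗ₖ A`-module. -/
theorem flat_module_lifts_of_ext2_vanishing
    (k : Type u) [Field k]
    (A A' : Type u) [CommRing A] [CommRing A'] [IsArtinianRing A] [IsArtinianRing A']
    [IsLocalRing A] [IsLocalRing A'] [Algebra k A] [Algebra k A']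
    (hresA : Function.Bijective (algebraMap k (ResidueField A)))
    (hresA' : Function.Bijective (algebraMap k (ResidueField A')))
    (π : A' →ₐ[k] A) (hπ : Function.Surjective π)
    (hsmall : maximalIdeal A' * RingHom.ker π = ⊥)
    (R : Type u) [CommRing R] [Algebra k R]
    (M : Type u) [AddCommGroup M] [Module (R ⊗[k] A) M]
    [Module A M] [IsScalarTower A (R ⊗[k] A) M]
    [Module R M] [IsScalarTower R (R ⊗[k] A) M]
    [SMulCommClass A R M]
    [Module.Flat A M]
    (hext : Subsingleton
      (((Ext R (ModuleCat.{u} R) 2).obj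
          (Opposite.op (ModuleCat.of R (M ⊗[A] ResidueField A)))).obj
        (ModuleCat.of R (M ⊗[A] ResidueField A)))) :
    ∃ M' : ModuleCat.{u} (R ⊗[k] A'),
      letI : Algebra (R ⊗[k] A') (R ⊗[k] A) :=
        (tensorHom k A A' π R).toRingHom.toAlgebra
      letI : Module A' M' := Module.compHom M' (algebraMap A' (R ⊗[k] A'))
      Module.Flat A' M' ∧
      Nonempty ((((R ⊗[k] A) ⊗[R ⊗[k] A'] M')) ≃ₗ[R ⊗[k] A] M) := by
  obtain ⟨r0, hr0⟩ := exists_residue k A' hresA'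
  obtain ⟨n, e, l, heI, he, hl⟩ := exists_coordinates r0 hr0 (RingHom.ker π) hsmall
  have hflat := flat_rightAlgebra k A R
  have halg : ∀ a : A', algebraMap A' (R ⊗[k] A') a = 1 ⊗ₜ a :=
    Algebra.TensorProduct.right_algebraMap_apply
  have hsurj : Function.Surjective (tensorHom k A A' π R) :=
    TensorProduct.map_surjective Function.surjective_id hπ
  have hker : RingHom.ker (tensorHom k A A' π R).toRingHom =
      (RingHom.ker π).map (algebraMap A' (R ⊗[k] A')) :=
    Algebra.TensorProduct.lTensor_ker π hπ
  let ρ : R ⊗[k] A' →ₐ[R] R :=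
    Algebra.TensorProduct.lift (AlgHom.id R R) ((Algebra.ofId k R).comp r0)
      fun _ _ => Commute.all _ _
  have hρ : ∀ s a, ρ (s ⊗ₜ a) = s * algebraMap k R (r0 a) := fun s a => rfl
  have hρm : ∀ b ∈ (maximalIdeal A').map (algebraMap A' (R ⊗[k] A')), ρ b = 0 := by
    intro b hb
    have : (maximalIdeal A').map (algebraMap A' (R ⊗[k] A')) ≤ RingHom.ker ρ := by
      refine Ideal.map_le_iff_le_comap.2 fun a ha => ?_
      rw [Ideal.mem_comap, RingHom.mem_ker, halg, hρ, (hr0 a).2 ha, map_zero, mul_zero]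
    exact this hb
  have hmρ : ∀ b, b - algebraMap R (R ⊗[k] A') (ρ b) ∈
      (maximalIdeal A').map (algebraMap A' (R ⊗[k] A')) := by
    intro b
    induction b with
    | zero => simp
    | add x y hx hy =>
      rw [map_add, map_add, add_sub_add_comm]
      exact add_mem hx hy
    | tmul s a =>
      have ha : a - algebraMap k A' (r0 a) ∈ maximalIdeal A' := by
        rw [← hr0]; simp
      have h1 : s ⊗ₜ[k] a - algebraMap R (R ⊗[k] A') (ρ (s ⊗ₜ a)) =
          (s ⊗ₜ 1) * algebraMap A' (R ⊗[k] A') (a - algebraMap k A' (r0 a)) := by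
        rw [halg, Algebra.TensorProduct.tmul_mul_tmul, mul_one, one_mul, tmul_sub, hρ,
          Algebra.TensorProduct.algebraMap_apply, Algebra.algebraMap_self_apply,
          Algebra.algebraMap_eq_smul_one (R := k) (A := A'), tmul_smul, mul_comm,
          ← Algebra.smul_def, smul_tmul']
      rw [h1]
      exact Ideal.mul_mem_left _ _ (Ideal.mem_map_of_mem _ ha)
  let lam : Fin n → R ⊗[k] A' →ₗ[R] R := fun j =>
    (TensorProduct.AlgebraTensorModule.rid k R R).toLinearMap ∘ₗ (l j).baseChange R
  have hlam : ∀ i j b, lam j (algebraMap A' (R ⊗[k] A') (e i) * b) = if i = j then ρ b else 0 := by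
    intro i j b
    induction b with
    | zero => simp
    | add x y hx hy =>
      rw [mul_add, map_add, hx, hy, map_add]
      split_ifs <;> simp
    | tmul s a =>
      rw [halg, Algebra.TensorProduct.tmul_mul_tmul, one_mul, mul_comm,
        mul_eq_residue_smul r0 hr0 _ hsmall a (heI i), hρ]
      simp only [lam, LinearMap.comp_apply, LinearMap.baseChange_tmul, map_smul, hl,
        LinearEquiv.coe_coe, TensorProduct.AlgebraTensorModule.rid_tmul]
      split_ifs
      · rw [smul_eq_mul, mul_one, Algebra.smul_def, mul_comm]
      · simp
  obtain ⟨M', f, hf, hfs, hfk, hfree⟩ := exists_lift_of_ext2 (A := A) (B := R ⊗[k] A) (M := M)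
    π hπ hsmall (tensorHom k A A' π R).toRingHom hsurj
    (fun a => by
      rw [halg, Algebra.TensorProduct.right_algebraMap_apply]
      change (1 : R) ⊗ₜ[k] π a = _
      rfl)
    (fun s => by
      change s ⊗ₜ[k] π 1 = s ⊗ₜ 1
      rw [map_one]) hker ρ hρm hmρ e heI (fun a ha => ⟨_, he a ha⟩) lam hlam hext
  refine ⟨M', ?_, ?_⟩
  · let _ : Module A' M' := Module.compHom M' (algebraMap A' (R ⊗[k] A'))
    exact Module.Flat.of_free
  · let _ : Algebra (R ⊗[k] A') (R ⊗[k] A) := (tensorHom k A A' π R).toRingHom.toAlgebra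
    exact nonempty_baseChange_equiv hsurj f hf hfs hfk
end
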